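/- Let r ≥ 2 and a ≥ 1 be fixed integers, let d > 0 be a fixed real number, and let 𝒯 be a Builder strategy tree with r colors on a board with a vertices that is legal for density restriction d. Let N : ℕ → ℕ satisfy n^{2−1/d} = o(N(n)) and N(n) = o(n²). Then for every integer k ≥ 0 and every sequence of online Painter strategies with r colors (one for each n), there exists a constant c > 0 such that the probability of the following event tends to 1 as n → ∞: the r-edge-colored board G_{N(n)} of the online game on n vertices contains a copy (as an edge-colored graph) of some leaf of 𝒯, or there is a node B at depth k in 𝒯 such that G_{N(n)} contains at least c · n^a · (N(n)·n^{−2})^k copies of B. -/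

import Mathlib

open SimpleGraph Filter Asymptotics
open scoped Classical

/-- A history of the game: the sequence of edges presented so far, together with
the colors (elements of `Fin r`, representing the colors `1,…,r`) they received. -/
abbrev EdgeHistory (V : Type) (r : ℕ) := List (Sym2 V × Fin r)

/-- A Painter strategy on vertex type `V` with `r` colors: a function assigning a color
to every pair (history, new edge). -/
abbrev PainterStrategy (V : Type) (r : ℕ) := EdgeHistory V r → Sym2 V → Fin r

/-- Auxiliary function: run a Painter strategy on a list of presented edges,
extending the given history. -/
def runPainterAux {V : Type} {r : ℕ} (π : PainterStrategy V r) :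
    EdgeHistory V r → List (Sym2 V) → EdgeHistory V r
  | h, [] => h
  | h, e :: es => runPainterAux π (h ++ [(e, π h e)]) es

/-- The colored history obtained by coloring the edges of `l` successively
according to the Painter strategy `π`. -/
def runPainter {V : Type} {r : ℕ} (π : PainterStrategy V r) (l : List (Sym2 V)) :
    EdgeHistory V r :=
  runPainterAux π [] l

/-- `G` contains a copy of `F`, i.e. a subgraph isomorphic to `F`. -/
def IsCopy {α β : Type} (F : SimpleGraph α) (G : SimpleGraph β) : Prop :=
  ∃ f : α ↪ β, ∀ u v : α, F.Adj u v → G.Adj (f u) (f v)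

/-- The graph formed by the edges of color `c` in the history `h`. -/
def colorGraph {V : Type} {r : ℕ} (h : EdgeHistory V r) (c : Fin r) : SimpleGraph V :=
  SimpleGraph.fromEdgeSet {e | (e, c) ∈ h}

/-- The history `h` contains a monochromatic copy of `F`. -/
def HasMonoCopy {α V : Type} {r : ℕ} (F : SimpleGraph α) (h : EdgeHistory V r) : Prop :=
  ∃ c : Fin r, IsCopy F (colorGraph h c)

/-- The number of edges of `G` lying entirely within the vertex set `S`. -/
noncomputable def edgesWithin {V : Type} (G : SimpleGraph V) (S : Set V) : ℕ :=
  (G.edgeSet ∩ {e | ∀ v ∈ e, v ∈ S}).ncard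

/-- `m(G) ≤ d`: every subgraph `H` of `G` with at least one vertex satisfies `e_H ≤ d · v_H`. -/
def DensityLE {V : Type} (G : SimpleGraph V) (d : ℝ) : Prop :=
  ∀ S : Finset V, S.Nonempty → (edgesWithin G (↑S : Set V) : ℝ) ≤ d * (S.card : ℝ)

/-- `G` contains no cycle and every connected component of `G` has at most `k` edges
(equivalently, `G` is acyclic and contains no connected subgraph with more than `k` edges). -/
def TreeSizeLE {V : Type} (G : SimpleGraph V) (k : ℕ) : Prop :=
  G.IsAcyclic ∧ ∀ S : Set V, (G.induce S).Connected → edgesWithin G S ≤ k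

/-- A legal sequence of moves for Builder: distinct non-loop edges. -/
def ValidEdgeSeq {V : Type} (l : List (Sym2 V)) : Prop :=
  l.Nodup ∧ ∀ e ∈ l, ¬ e.IsDiag

/-- The (uncolored) board formed by a list of edges. -/
def boardOf {V : Type} (l : List (Sym2 V)) : SimpleGraph V :=
  SimpleGraph.fromEdgeSet {e | e ∈ l}

/-- Builder has a winning strategy in the deterministic `F`-avoidance game with `r` colors
and density restriction `d`. -/
def BuilderWinsDensity {α : Type} (F : SimpleGraph α) (r : ℕ) (d : ℝ) : Prop :=
  ∃ a : ℕ, ∀ π : PainterStrategy (Fin a) r, ∃ l : List (Sym2 (Fin a)),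
    ValidEdgeSeq l ∧ (∀ i : ℕ, DensityLE (boardOf (l.take i)) d) ∧
    HasMonoCopy F (runPainter π l)

/-- Builder has a winning strategy in the deterministic `F`-avoidance game with `r` colors
and tree size restriction `k`. -/
def BuilderWinsTree {α : Type} (F : SimpleGraph α) (r k : ℕ) : Prop :=
  ∃ a : ℕ, ∀ π : PainterStrategy (Fin a) r, ∃ l : List (Sym2 (Fin a)),
    ValidEdgeSeq l ∧ (∀ i : ℕ, TreeSizeLE (boardOf (l.take i)) k) ∧
    HasMonoCopy F (runPainter π l)

/-- The Painter strategy `π` on `a` vertices never creates a monochromatic copy of `F`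
against any Builder play obeying the tree size restriction `k`. -/
def PainterAvoidsTree {α : Type} (F : SimpleGraph α) (r k a : ℕ)
    (π : PainterStrategy (Fin a) r) : Prop :=
  ∀ l : List (Sym2 (Fin a)), ValidEdgeSeq l →
    (∀ i : ℕ, TreeSizeLE (boardOf (l.take i)) k) →
    ¬ HasMonoCopy F (runPainter π l)

/-- Painter has a winning strategy in the deterministic `F`-avoidance game with `r` colors
and tree size restriction `k`. -/
def PainterWinsTree {α : Type} (F : SimpleGraph α) (r k : ℕ) : Prop :=
  ∀ a : ℕ, ∃ π : PainterStrategy (Fin a) r, PainterAvoidsTree F r k a π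

/-- A sequence of `N` distinct non-loop edges on `n` vertices. -/
def ValidSeqFun {n N : ℕ} (f : Fin N → Sym2 (Fin n)) : Prop :=
  Function.Injective f ∧ ∀ i, ¬ (f i).IsDiag

/-- The probability (with respect to the uniformly random order in which the `N` distinct
edges of the random process on `n` vertices appear) of the event `P`. -/
noncomputable def onlineProb (n N : ℕ) (P : (Fin N → Sym2 (Fin n)) → Prop) : ℝ :=
  (Set.ncard {f : Fin N → Sym2 (Fin n) | ValidSeqFun f ∧ P f} : ℝ) /
  (Set.ncard {f : Fin N → Sym2 (Fin n) | ValidSeqFun f} : ℝ)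

/-- Event: playing the online strategy `π` on the random edge sequence `f` produces
a monochromatic copy of `F`. -/
def OnlineMonoCopy {α : Type} (F : SimpleGraph α) {r n N : ℕ}
    (π : PainterStrategy (Fin n) r) (f : Fin N → Sym2 (Fin n)) : Prop :=
  HasMonoCopy F (runPainter π (List.ofFn f))

/-- A Builder strategy tree with `r` colors: at each non-leaf node Builder presents
an edge `e`, and the game continues in the child indexed by the color Painter chooses. -/
inductive BuilderTree (V : Type) (r : ℕ) : Type
  | leaf : BuilderTree V r
  | node (e : Sym2 V) (child : Fin r → BuilderTree V r) : BuilderTree V r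

/-- The strategy tree is proper, relative to the list `used` of edges already on the board:
every presented edge is a non-loop vertex pair that is not yet an edge of the board. -/
def BuilderTree.Proper {V : Type} {r : ℕ} : BuilderTree V r → List (Sym2 V) → Prop
  | .leaf, _ => True
  | .node e child, used => ¬ e.IsDiag ∧ e ∉ used ∧ ∀ c : Fin r, (child c).Proper (e :: used)

/-- The strategy tree is legal for density restriction `d`, relative to the set `cur` of
edges already on the board: the underlying uncolored graph of every node satisfies `m(B) ≤ d`. -/
def BuilderTree.LegalDensity {V : Type} {r : ℕ} (d : ℝ) :
    BuilderTree V r → Set (Sym2 V) → Prop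
  | .leaf, _ => True
  | .node e child, cur =>
      DensityLE (SimpleGraph.fromEdgeSet (insert e cur)) d ∧
      ∀ c : Fin r, (child c).LegalDensity d (insert e cur)

/-- The colored histories (colored boards) corresponding to the nodes at depth `k` of the
strategy tree. -/
def BuilderTree.nodeHistsAt {V : Type} {r : ℕ} :
    BuilderTree V r → ℕ → Set (EdgeHistory V r)
  | _, 0 => {[]}
  | .leaf, _ + 1 => ∅
  | .node e child, k + 1 =>
      ⋃ c : Fin r, (fun h => (e, c) :: h) '' ((child c).nodeHistsAt k)

/-- The colored histories (colored boards) corresponding to the leaves of the strategy tree. -/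
def BuilderTree.leafHists {V : Type} {r : ℕ} : BuilderTree V r → Set (EdgeHistory V r)
  | .leaf => {[]}
  | .node e child => ⋃ c : Fin r, (fun h => (e, c) :: h) '' ((child c).leafHists)

/-- The copies of the colored graph given by the history `B` (on `Fin a`) in the colored
graph given by the history `H` (on `Fin n`): injections preserving all edges together with
their colors. -/
def ColoredCopies {a n r : ℕ} (B : EdgeHistory (Fin a) r) (H : EdgeHistory (Fin n) r) :
    Set (Fin a ↪ Fin n) :=
  {f | ∀ c : Fin r, ∀ u v : Fin a,
    (colorGraph B c).Adj u v → (colorGraph H c).Adj (f u) (f v)}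

/-- The colored history `H` contains a copy (as an edge-colored graph) of some leaf of `T`. -/
def HasLeafCopy {a n r : ℕ} (T : BuilderTree (Fin a) r) (H : EdgeHistory (Fin n) r) : Prop :=
  ∃ B ∈ T.leafHists, (ColoredCopies B H).Nonempty

/-!
Write `p` for the density of the board and `D k = n ^ a * p ^ k` for the order of magnitude of the
number of copies of a node at depth `k`. The assumptions on `N` say that `p → 0` and
`ω = n * p ^ d → ∞`. The induction on `k` splits the steps played so far into two halves. If after
the first half there are at least `c * D k` copies of a node `B` at depth `k` that is not a leaf,
let `e` be the edge Builder presents at `B`, and give each vertex pair `x` the weight `w x`, the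
number of copies of `B` that map `e` to `x`. Given the first half, the edges of the second half form
a uniformly random set of unused pairs, so by Chebyshev's inequality they collect total weight of
order `D (k + 1)`, unless `∑ x, w x ^ 2` is large. Each copy so collected becomes a copy of a child
of `B`, whatever Painter does, and by pigeonhole some child receives a `1 / r` fraction of them.

Painter's influence disappears from `∑ x, w x ^ 2`: this sum is at most the number of pairs of
uncolored copies of `B` in the random graph that send `e` to the same pair. If two such copies
overlap in the vertex set `J` of `B`, then `J` spans `e`, and `m(B + e) ≤ d` gives
`n ^ #J * p ^ e(J) ≥ ω`, where `e(J)` counts the edges of `B + e` inside `J`. Hence the expected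
number of these pairs is at most a constant times `(D k) ^ 2 * p / ω`.
-/

section UniformProbability

open Finset
open scoped BigOperators

variable {Ω : Type*} {s : Finset Ω} {P Q : Ω → Prop}

/-- The probability of the event `P` for a uniformly random element of the finite sample
space `s`; as an average over `s` it is `0` when `s` is empty. -/
noncomputable def unifProb (s : Finset Ω) (P : Ω → Prop) : ℝ :=
  𝔼 ω ∈ s, if P ω then 1 else 0

theorem unifProb_eq_expect (s : Finset Ω) (P : Ω → Prop) [DecidablePred P] :
    unifProb s P = 𝔼 ω ∈ s, if P ω then 1 else 0 := by
  rw [unifProb]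
  congr!

theorem unifProb_eq_card_div (s : Finset Ω) (P : Ω → Prop) :
    unifProb s P = (#{ω ∈ s | P ω} : ℝ) / #s := by
  rw [unifProb, expect_eq_sum_div_card, sum_boole]

theorem unifProb_nonneg (s : Finset Ω) (P : Ω → Prop) : 0 ≤ unifProb s P := by
  rw [unifProb_eq_card_div]
  positivity

theorem unifProb_mono (h : ∀ ω ∈ s, P ω → Q ω) : unifProb s P ≤ unifProb s Q := by
  simp only [unifProb_eq_card_div]
  gcongr with ω hω
  exact h ω hω

theorem unifProb_eq_zero (h : ∀ ω ∈ s, ¬ P ω) : unifProb s P = 0 := by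
  rw [unifProb_eq_card_div, filter_false_of_mem h, card_empty, Nat.cast_zero, zero_div]

theorem unifProb_or_le (s : Finset Ω) (P Q : Ω → Prop) :
    unifProb s (fun ω => P ω ∨ Q ω) ≤ unifProb s P + unifProb s Q := by
  simp only [unifProb, ← expect_add_distrib]
  refine expect_le_expect fun ω _ => ?_
  by_cases hP : P ω <;> by_cases hQ : Q ω <;> norm_num [hP, hQ]

theorem unifProb_exists_mem_le {ι : Type*} (s : Finset Ω) (I : Finset ι) (R : ι → Ω → Prop) :
    unifProb s (fun ω => ∃ i ∈ I, R i ω) ≤ ∑ i ∈ I, unifProb s (R i) := by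
  induction I using Finset.induction_on with
  | empty => simp [unifProb]
  | insert i I hi ih =>
    simp only [exists_mem_insert, sum_insert hi]
    exact (unifProb_or_le _ _ _).trans (add_le_add_right ih _)

theorem unifProb_not (hs : s.Nonempty) (P : Ω → Prop) :
    unifProb s (fun ω => ¬ P ω) = 1 - unifProb s P := by
  rw [eq_sub_iff_add_eq, ← expect_const hs (1 : ℝ)]
  simp only [unifProb, ← expect_add_distrib]
  refine expect_congr rfl fun ω _ => ?_
  by_cases hP : P ω <;> simp [hP]

theorem mul_unifProb_lt_le_expect {Y : Ω → ℝ} (hY : ∀ ω ∈ s, 0 ≤ Y ω) (t : ℝ) :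
    t * unifProb s (fun ω => t < Y ω) ≤ 𝔼 ω ∈ s, Y ω := by
  rw [unifProb, mul_expect]
  refine expect_le_expect fun ω hω => ?_
  split_ifs with h
  · simpa only [mul_one] using h.le
  · simpa only [mul_zero] using hY ω hω

theorem expect_card_filter {ι : Type*} (s : Finset Ω) (t : Finset ι) (R : Ω → ι → Prop)
    [∀ ω, DecidablePred (R ω)] :
    𝔼 ω ∈ s, (#{i ∈ t | R ω i} : ℝ) = ∑ i ∈ t, unifProb s (fun ω => R ω i) := by
  simp only [← sum_boole, expect_sum_comm, unifProb_eq_expect]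

theorem unifProb_le_of_forall_fiber {L : Type*} [DecidableEq L] {ε : ℝ} (hε : 0 ≤ ε) (pre : Ω → L)
    (h : ∀ ω₀ ∈ s, unifProb {ω ∈ s | pre ω = pre ω₀} P ≤ ε) : unifProb s P ≤ ε := by
  have hfib : ∀ l ∈ s.image pre,
      (#{ω ∈ {ω ∈ s | P ω} | pre ω = l} : ℝ) ≤ ε * #{ω ∈ s | pre ω = l} := by
    intro l hl
    obtain ⟨ω₀, hω₀, rfl⟩ := mem_image.1 hl
    have hmem : ω₀ ∈ {ω ∈ s | pre ω = pre ω₀} := mem_filter.2 ⟨hω₀, rfl⟩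
    have hpos : 0 < (#{ω ∈ s | pre ω = pre ω₀} : ℝ) := by exact_mod_cast card_pos.2 ⟨ω₀, hmem⟩
    have := h ω₀ hω₀
    rwa [unifProb_eq_card_div, div_le_iff₀ hpos, filter_comm] at this
  rw [unifProb_eq_card_div]
  refine div_le_of_le_mul₀ (by positivity) hε ?_
  rw [card_eq_sum_card_fiberwise (f := pre) (t := s.image pre) (s := {ω ∈ s | P ω})
      fun ω hω => mem_image_of_mem _ (mem_filter.1 hω).1,
    card_eq_sum_card_image pre s]
  push_cast
  rw [mul_sum]
  exact sum_le_sum hfib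

end UniformProbability

section UniformSubsets

open Finset
open scoped BigOperators

theorem descFactorial_mul_pow_le {m n : ℕ} (h : m ≤ n) (k : ℕ) :
    m.descFactorial k * n ^ k ≤ n.descFactorial k * m ^ k := by
  induction k with
  | zero => simp only [Nat.descFactorial_zero, pow_zero, le_refl]
  | succ k ih =>
    have hfactor : (m - k) * n ≤ (n - k) * m := by
      rw [Nat.sub_mul, Nat.sub_mul, mul_comm m n]
      exact Nat.sub_le_sub_left (Nat.mul_le_mul_left k h) _
    calc m.descFactorial (k + 1) * n ^ (k + 1)
        = ((m - k) * n) * (m.descFactorial k * n ^ k) := by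
          rw [Nat.descFactorial_succ]; ring
      _ ≤ ((n - k) * m) * (n.descFactorial k * m ^ k) := Nat.mul_le_mul hfactor ih
      _ = n.descFactorial (k + 1) * m ^ (k + 1) := by rw [Nat.descFactorial_succ]; ring

theorem choose_mul_pow_le {m n : ℕ} (h : m ≤ n) (k : ℕ) :
    m.choose k * n ^ k ≤ n.choose k * m ^ k := by
  refine Nat.le_of_mul_le_mul_left ?_ k.factorial_pos
  simpa only [Nat.descFactorial_eq_factorial_mul_choose, mul_assoc]
    using descFactorial_mul_pow_le h k

variable {Ω E : Type*}

/-- Under the uniform distribution on `s`, the random set `R` is an exchangeable `M`-element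
subset of `A`: subsets of `A` of equal size are equally likely to be contained in `R`. This is
the only consequence of uniformity that moment computations need. -/
structure IsUniformSubset (s : Finset Ω) (R : Ω → Finset E) (A : Finset E) (M : ℕ) : Prop where
  subset : ∀ ω ∈ s, R ω ⊆ A
  card_eq : ∀ ω ∈ s, #(R ω) = M
  exchangeable : ∀ S ⊆ A, ∀ T ⊆ A, #S = #T →
    unifProb s (fun ω => S ⊆ R ω) = unifProb s (fun ω => T ⊆ R ω)

namespace IsUniformSubset

variable {s : Finset Ω} {R : Ω → Finset E} {A S : Finset E} {M : ℕ} {w : E → ℝ}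

theorem choose_mul_unifProb_subset (h : IsUniformSubset s R A M) (hs : s.Nonempty) (hS : S ⊆ A) :
    ((#A).choose #S : ℝ) * unifProb s (fun ω => S ⊆ R ω) = (M.choose #S : ℝ) := by
  have hcount : ∀ ω ∈ s, #{T ∈ A.powersetCard #S | T ⊆ R ω} = M.choose #S := by
    intro ω hω
    rw [← h.card_eq ω hω, ← card_powersetCard]
    congr 1
    ext T
    simp only [mem_filter, mem_powersetCard]
    exact ⟨fun hT => ⟨hT.2, hT.1.2⟩, fun hT => ⟨⟨hT.1.trans (h.subset ω hω), hT.2⟩, hT.1⟩⟩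
  calc ((#A).choose #S : ℝ) * unifProb s (fun ω => S ⊆ R ω)
      = ∑ T ∈ A.powersetCard #S, unifProb s (fun ω => T ⊆ R ω) := by
        rw [sum_congr rfl fun T hT => h.exchangeable T (mem_powersetCard.1 hT).1 S hS
          (mem_powersetCard.1 hT).2, sum_const, card_powersetCard, nsmul_eq_mul]
    _ = 𝔼 ω ∈ s, (#{T ∈ A.powersetCard #S | T ⊆ R ω} : ℝ) := (expect_card_filter ..).symm
    _ = (M.choose #S : ℝ) := by
        rw [expect_congr rfl fun ω hω => congrArg Nat.cast (hcount ω hω), expect_const hs]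

theorem le_card (h : IsUniformSubset s R A M) (hs : s.Nonempty) : M ≤ #A := by
  obtain ⟨ω, hω⟩ := hs
  exact h.card_eq ω hω ▸ card_le_card (h.subset ω hω)

theorem unifProb_subset_le (h : IsUniformSubset s R A M) (hS : S ⊆ A) :
    unifProb s (fun ω => S ⊆ R ω) ≤ ((M : ℝ) / #A) ^ #S := by
  rcases s.eq_empty_or_nonempty with rfl | hs
  · rw [unifProb, expect_empty]
    positivity
  have hchoose : 0 < ((#A).choose #S : ℝ) := by
    exact_mod_cast Nat.choose_pos (card_le_card hS)
  have hpow : 0 < (#A : ℝ) ^ #S := by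
    rcases S.eq_empty_or_nonempty with rfl | hne
    · simp only [card_empty, pow_zero, zero_lt_one]
    · exact pow_pos (Nat.cast_pos.2 (hne.mono hS).card_pos) _
  rw [div_pow, le_div_iff₀ hpow]
  refine le_of_mul_le_mul_left ?_ hchoose
  rw [← mul_assoc, h.choose_mul_unifProb_subset hs hS]
  exact_mod_cast choose_mul_pow_le (h.le_card hs) #S

theorem unifProb_mem (h : IsUniformSubset s R A M) (hs : s.Nonempty) {x : E} (hx : x ∈ A) :
    unifProb s (fun ω => x ∈ R ω) = (M : ℝ) / #A := by
  have hA : (#A : ℝ) ≠ 0 := by exact_mod_cast (card_pos.2 ⟨x, hx⟩).ne'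
  have hchoose := h.choose_mul_unifProb_subset hs (singleton_subset_iff.2 hx)
  simp only [card_singleton, Nat.choose_one_right, singleton_subset_iff] at hchoose
  rw [eq_div_iff hA, mul_comm, hchoose]

theorem unifProb_mem_and_mem_le (h : IsUniformSubset s R A M) {x y : E} (hx : x ∈ A)
    (hy : y ∈ A) :
    unifProb s (fun ω => x ∈ R ω ∧ y ∈ R ω) ≤
      (if x = y then (M : ℝ) / #A else 0) + ((M : ℝ) / #A) ^ 2 := by
  have hpair := h.unifProb_subset_le (insert_subset hx (singleton_subset_iff.2 hy))
  simp only [insert_subset_iff, singleton_subset_iff] at hpair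
  split_ifs with hxy
  · subst hxy
    rw [pair_eq_singleton, card_singleton, pow_one] at hpair
    exact hpair.trans (le_add_of_nonneg_right (by positivity))
  · rwa [card_pair hxy, ← zero_add (_ ^ 2)] at hpair

theorem sum_eq_sum_ite (h : IsUniformSubset s R A M) {ω : Ω} (hω : ω ∈ s) (w : E → ℝ) :
    ∑ x ∈ R ω, w x = ∑ x ∈ A, w x * if x ∈ R ω then 1 else 0 := by
  simp only [mul_ite, mul_one, mul_zero, sum_ite_mem, inter_eq_right.2 (h.subset ω hω)]

theorem expect_sum (h : IsUniformSubset s R A M) (hs : s.Nonempty) (w : E → ℝ) :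
    𝔼 ω ∈ s, ∑ x ∈ R ω, w x = (M : ℝ) / #A * ∑ x ∈ A, w x := by
  rw [expect_congr rfl fun ω hω => h.sum_eq_sum_ite hω w, expect_sum_comm, mul_sum]
  refine sum_congr rfl fun x hx => ?_
  rw [← mul_expect, ← h.unifProb_mem hs hx, unifProb_eq_expect, mul_comm]

theorem expect_sum_sq_le (h : IsUniformSubset s R A M) (hw : ∀ x, 0 ≤ w x) :
    𝔼 ω ∈ s, (∑ x ∈ R ω, w x) ^ 2 ≤
      (M : ℝ) / #A * ∑ x ∈ A, w x ^ 2 + ((M : ℝ) / #A * ∑ x ∈ A, w x) ^ 2 := by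
  set q : ℝ := (M : ℝ) / #A
  calc 𝔼 ω ∈ s, (∑ x ∈ R ω, w x) ^ 2
      = ∑ x ∈ A, ∑ y ∈ A, w x * w y * unifProb s (fun ω => x ∈ R ω ∧ y ∈ R ω) := by
        simp only [unifProb_eq_expect, mul_expect, ← expect_sum_comm]
        refine expect_congr rfl fun ω hω => ?_
        rw [h.sum_eq_sum_ite hω, sq, sum_mul_sum]
        refine sum_congr rfl fun x _ => sum_congr rfl fun y _ => ?_
        by_cases hx : x ∈ R ω <;> by_cases hy : y ∈ R ω <;> simp [hx, hy]
    _ ≤ ∑ x ∈ A, ∑ y ∈ A, w x * w y * ((if x = y then q else 0) + q ^ 2) := by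
        gcongr with x hx y hy
        · exact mul_nonneg (hw x) (hw y)
        · exact h.unifProb_mem_and_mem_le hx hy
    _ = q * ∑ x ∈ A, w x ^ 2 + (q * ∑ x ∈ A, w x) ^ 2 := by
        simp only [mul_add, sum_add_distrib, mul_ite, mul_zero, sum_ite_eq]
        rw [mul_pow, sq (∑ x ∈ A, w x), sum_mul_sum, mul_sum, mul_sum]
        congr 1
        · exact sum_congr rfl fun x hx => by rw [if_pos hx]; ring
        · exact sum_congr rfl fun x _ => by rw [mul_sum]; exact sum_congr rfl fun y _ => by ring

theorem expect_sq_sub_le (h : IsUniformSubset s R A M) (hs : s.Nonempty) (hw : ∀ x, 0 ≤ w x) :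
    𝔼 ω ∈ s, (∑ x ∈ R ω, w x - (M : ℝ) / #A * ∑ x ∈ A, w x) ^ 2 ≤
      (M : ℝ) / #A * ∑ x ∈ A, w x ^ 2 := by
  set μ : ℝ := (M : ℝ) / #A * ∑ x ∈ A, w x
  have hmean : 𝔼 ω ∈ s, ∑ x ∈ R ω, w x = μ := h.expect_sum hs w
  have hsecond := h.expect_sum_sq_le hw
  simp only [sub_sq, expect_add_distrib, expect_sub_distrib, expect_const hs, ← expect_mul,
    ← mul_expect, hmean]
  linarith

theorem unifProb_sum_lt_le (h : IsUniformSubset s R A M) (hw : ∀ x, 0 ≤ w x) {b v : ℝ}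
    (hb : 0 < b) (hbw : b ≤ ∑ x ∈ A, w x) (hv : ∑ x ∈ A, w x ^ 2 ≤ v) :
    unifProb s (fun ω => ∑ x ∈ R ω, w x < (M : ℝ) / #A * b / 2) ≤
      4 * v / ((M : ℝ) / #A * b ^ 2) := by
  have hv0 : 0 ≤ v := (sum_nonneg fun x _ => sq_nonneg (w x)).trans hv
  set q : ℝ := (M : ℝ) / #A
  have hq : 0 ≤ q := by positivity
  rcases s.eq_empty_or_nonempty with rfl | hs
  · rw [unifProb, expect_empty]
    positivity
  rcases hq.eq_or_lt with hq0 | hq0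
  · rw [unifProb_eq_zero]
    · positivity
    · intro ω _
      rw [← hq0, zero_mul, zero_div, not_lt]
      exact sum_nonneg fun x _ => hw x
  have hfar : ∀ ω ∈ s, ∑ x ∈ R ω, w x < q * b / 2 →
      (q * b / 2) ^ 2 < (∑ x ∈ R ω, w x - q * ∑ x ∈ A, w x) ^ 2 := by
    intro ω _ hω
    have := mul_le_mul_of_nonneg_left hbw hq
    rw [← neg_sub, neg_sq]
    exact pow_lt_pow_left₀ (by linarith) (by positivity) two_ne_zero
  have hmarkov : (q * b / 2) ^ 2 * unifProb s (fun ω => ∑ x ∈ R ω, w x < q * b / 2) ≤ q * v :=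
    calc (q * b / 2) ^ 2 * unifProb s (fun ω => ∑ x ∈ R ω, w x < q * b / 2)
        ≤ (q * b / 2) ^ 2 * unifProb s
            (fun ω => (q * b / 2) ^ 2 < (∑ x ∈ R ω, w x - q * ∑ x ∈ A, w x) ^ 2) := by
          gcongr
          exact unifProb_mono hfar
      _ ≤ 𝔼 ω ∈ s, (∑ x ∈ R ω, w x - q * ∑ x ∈ A, w x) ^ 2 :=
          mul_unifProb_lt_le_expect (fun ω _ => sq_nonneg _) _
      _ ≤ q * ∑ x ∈ A, w x ^ 2 := h.expect_sq_sub_le hs hw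
      _ ≤ q * v := by gcongr
  rw [le_div_iff₀ (by positivity)]
  refine le_of_mul_le_mul_left ?_ hq0
  linarith

end IsUniformSubset

end UniformSubsets

section RandomSequences

open Finset

theorem unifProb_congr_perm {Ω : Type*} {s : Finset Ω} {P Q : Ω → Prop} (e : Equiv.Perm Ω)
    (hs : ∀ ω, ω ∈ s ↔ e ω ∈ s) (hPQ : ∀ ω ∈ s, P ω ↔ Q (e ω)) :
    unifProb s P = unifProb s Q :=
  expect_equiv e hs fun ω hω => by simp only [hPQ ω hω]

variable {E : Type*} {A : Finset E} {N s t : ℕ} {F : Fin N → E}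

/-- The sequences of `N` distinct elements of `A`. -/
noncomputable def injSeqs (A : Finset E) (N : ℕ) : Finset (Fin N → E) :=
  {F ∈ Fintype.piFinset fun _ => A | Function.Injective F}

theorem mem_injSeqs : F ∈ injSeqs A N ↔ (∀ i, F i ∈ A) ∧ Function.Injective F := by
  simp only [injSeqs, mem_filter, Fintype.mem_piFinset]

theorem injSeqs_nonempty (h : N ≤ #A) : (injSeqs A N).Nonempty := by
  obtain ⟨F⟩ : Nonempty (Fin N ↪ A) :=
    Function.Embedding.nonempty_of_card_le (by simpa only [Fintype.card_fin, Fintype.card_coe])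
  exact ⟨fun i => F i, mem_injSeqs.2
    ⟨fun i => (F i).2, Subtype.val_injective.comp F.injective⟩⟩

theorem mem_injSeqs_perm_comp {σ : Equiv.Perm E} (hσ : ∀ x, σ x ∈ A ↔ x ∈ A) :
    (fun i => σ (F i)) ∈ injSeqs A N ↔ F ∈ injSeqs A N := by
  simp only [mem_injSeqs, hσ]
  exact and_congr_right fun _ => σ.injective.of_comp_iff F

theorem nodup_ofFn_take (hF : F ∈ injSeqs A N) (t : ℕ) : ((List.ofFn F).take t).Nodup :=
  (List.nodup_ofFn.2 (mem_injSeqs.1 hF).2).sublist (List.take_sublist t _)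

theorem take_ofFn_perm_comp (σ : Equiv.Perm E) (F : Fin N → E) (t : ℕ) :
    (List.ofFn fun i => σ (F i)).take t = ((List.ofFn F).take t).map σ := by
  rw [List.ofFn_comp', List.map_take]

theorem take_append_drop_take (l : List E) (hst : s ≤ t) :
    l.take s ++ (l.take t).drop s = l.take t := by
  conv_rhs => rw [← List.take_append_drop s (l.take t), List.take_take, min_eq_left hst]

variable [DecidableEq E]

theorem exists_perm_image_eq {S T : Finset E} (hS : S ⊆ A) (hT : T ⊆ A) (hcard : #S = #T) :
    ∃ σ : Equiv.Perm E, S.image σ = T ∧ ∀ x ∉ A, σ x = x := by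
  let e : {x : A // (x : E) ∈ S} ≃ {x : A // (x : E) ∈ T} :=
    (Equiv.subtypeSubtypeEquivSubtype fun {_} h => hS h).trans
      ((equivOfCardEq hcard).trans (Equiv.subtypeSubtypeEquivSubtype fun {_} h => hT h).symm)
  refine ⟨Equiv.Perm.ofSubtype e.extendSubtype, ?_, fun x hx =>
    Equiv.Perm.ofSubtype_apply_of_not_mem _ hx⟩
  refine eq_of_subset_of_card_le (image_subset_iff.2 fun x hx => ?_) ?_
  · rw [Equiv.Perm.ofSubtype_apply_of_mem _ (hS hx)]
    exact e.extendSubtype_mem ⟨x, hS hx⟩ hx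
  · rw [card_image_of_injective _ (Equiv.injective _), hcard]

/-- The set of the entries of `F` at the positions `i` with `s ≤ i < t`. -/
def window (F : Fin N → E) (s t : ℕ) : Finset E :=
  (((List.ofFn F).take t).drop s).toFinset

theorem card_window (hF : F ∈ injSeqs A N) (s : ℕ) (ht : t ≤ N) :
    #(window F s t) = t - s := by
  rw [window, List.toFinset_card_of_nodup ((nodup_ofFn_take hF t).sublist (List.drop_sublist s _)),
    List.length_drop, List.length_take, List.length_ofFn, min_eq_left ht]

theorem window_subset (hF : F ∈ injSeqs A N) (hst : s ≤ t) :
    window F s t ⊆ A \ ((List.ofFn F).take s).toFinset := by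
  intro x hx
  have hx : x ∈ ((List.ofFn F).take t).drop s := List.mem_toFinset.1 hx
  obtain ⟨i, rfl⟩ := List.mem_ofFn.1 (List.mem_of_mem_take (List.mem_of_mem_drop hx))
  have hnodup := nodup_ofFn_take hF t
  rw [← take_append_drop_take _ hst] at hnodup
  exact mem_sdiff.2 ⟨(mem_injSeqs.1 hF).1 i, fun hpre =>
    (List.nodup_append.1 hnodup).2.2 _ (List.mem_toFinset.1 hpre) _ hx rfl⟩

theorem window_perm_comp (σ : Equiv.Perm E) (F : Fin N → E) (s t : ℕ) :
    window (fun i => σ (F i)) s t = (window F s t).image σ := by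
  ext x
  simp only [window, take_ofFn_perm_comp, ← List.map_drop, List.mem_toFinset, List.mem_map,
    mem_image]

theorem isUniformSubset_window (hst : s ≤ t) (ht : t ≤ N) (l : List E) :
    IsUniformSubset {F ∈ injSeqs A N | (List.ofFn F).take s = l}
      (fun F => window F s t) (A \ l.toFinset) (t - s) where
  subset F hF := by
    rw [← (mem_filter.1 hF).2]
    exact window_subset (mem_filter.1 hF).1 hst
  card_eq F hF := card_window (mem_filter.1 hF).1 s ht
  exchangeable S hS T hT hcard := by
    obtain ⟨σ, rfl, hfix⟩ := exists_perm_image_eq hS hT hcard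
    have hσA : ∀ x, σ x ∈ A ↔ x ∈ A := fun x => by
      by_cases hx : x ∈ A \ l.toFinset
      · have hσx : σ x ∈ A \ l.toFinset := by
          by_contra hσx
          exact absurd hx (σ.injective (hfix _ hσx) ▸ hσx)
        exact iff_of_true (mem_sdiff.1 hσx).1 (mem_sdiff.1 hx).1
      · rw [hfix x hx]
    have hσl : l.map σ = l := (List.map_congr_left fun x hx => hfix x fun hxA =>
      (mem_sdiff.1 hxA).2 (List.mem_toFinset.2 hx)).trans (List.map_id l)
    refine unifProb_congr_perm (Equiv.piCongrRight fun _ => σ) (fun F => ?_) fun F _ => ?_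
    · change _ ↔ (fun i => σ (F i)) ∈ _
      rw [mem_filter, mem_filter, mem_injSeqs_perm_comp hσA, take_ofFn_perm_comp]
      nth_rewrite 2 [← hσl]
      rw [(List.map_injective_iff.2 σ.injective).eq_iff]
    · change _ ↔ S.image σ ⊆ window (fun i => σ (F i)) s t
      rw [window_perm_comp, image_subset_image_iff σ.injective]

theorem isUniformSubset_toFinset_ofFn (A : Finset E) (N : ℕ) :
    IsUniformSubset (injSeqs A N) (fun F => (List.ofFn F).toFinset) A N := by
  have h := isUniformSubset_window (A := A) (Nat.zero_le N) le_rfl []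
  simp only [List.take_zero, filter_true, window, List.drop_zero, List.toFinset_nil, sdiff_empty,
    Nat.sub_zero] at h
  convert h using 3 with F
  exact (List.take_of_length_le (List.length_ofFn ..).le).symm

theorem unifProb_window_sum_lt_le (hst : s < t) (ht : t ≤ N) {w : List E → E → ℝ}
    (hw : ∀ l x, 0 ≤ w l x) {b v : ℝ} (hb : 0 < b) (hv : 0 ≤ v) :
    unifProb (injSeqs A N) (fun F =>
      b ≤ ∑ x ∈ A \ ((List.ofFn F).take s).toFinset, w ((List.ofFn F).take s) x ∧
      ∑ x ∈ A \ ((List.ofFn F).take s).toFinset, w ((List.ofFn F).take s) x ^ 2 ≤ v ∧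
      ∑ x ∈ window F s t, w ((List.ofFn F).take s) x < ((t - s : ℕ) : ℝ) / #A * b / 2) ≤
    4 * v / (((t - s : ℕ) : ℝ) / #A * b ^ 2) := by
  refine unifProb_le_of_forall_fiber (by positivity) (fun F => (List.ofFn F).take s)
    fun F₀ hF₀ => ?_
  set l := (List.ofFn F₀).take s
  have hunif := isUniformSubset_window (A := A) hst.le ht l
  by_cases hgood : b ≤ ∑ x ∈ A \ l.toFinset, w l x ∧ ∑ x ∈ A \ l.toFinset, w l x ^ 2 ≤ v
  swap
  · rw [unifProb_eq_zero]
    · positivity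
    · rintro F hF ⟨hFb, hFv, -⟩
      rw [(mem_filter.1 hF).2] at hFb hFv
      exact hgood ⟨hFb, hFv⟩
  have hM : 0 < t - s := Nat.sub_pos_of_lt hst
  have hcard : t - s ≤ #(A \ l.toFinset) := hunif.le_card ⟨F₀, mem_filter.2 ⟨hF₀, rfl⟩⟩
  have hpos : (0 : ℝ) < #(A \ l.toFinset) := by exact_mod_cast hM.trans_le hcard
  have hq : ((t - s : ℕ) : ℝ) / #A ≤ ((t - s : ℕ) : ℝ) / #(A \ l.toFinset) := by
    gcongr
    exact sdiff_subset
  have hposA : (0 : ℝ) < #A := hpos.trans_le (by exact_mod_cast card_le_card sdiff_subset)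
  calc _ ≤ unifProb {F ∈ injSeqs A N | (List.ofFn F).take s = l} (fun F =>
          ∑ x ∈ window F s t, w l x < ((t - s : ℕ) : ℝ) / #(A \ l.toFinset) * b / 2) := by
        refine unifProb_mono fun F hF hPF => ?_
        rw [(mem_filter.1 hF).2] at hPF
        exact hPF.2.2.trans_le (by gcongr)
    _ ≤ 4 * v / (((t - s : ℕ) : ℝ) / #(A \ l.toFinset) * b ^ 2) :=
        hunif.unifProb_sum_lt_le (hw l) hb hgood.1 hgood.2
    _ ≤ _ := by gcongr

end RandomSequences

section Moments

open Finset
open scoped BigOperators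

/-- The two-element subsets of `V`, that is the edges of the complete graph on `V`. -/
noncomputable def pairs (V : Type*) [Fintype V] : Finset (Sym2 V) :=
  {e | ¬ e.IsDiag}

theorem mem_pairs {V : Type*} [Fintype V] {e : Sym2 V} : e ∈ pairs V ↔ ¬ e.IsDiag := by
  simp only [pairs, mem_filter, mem_univ, true_and]

theorem card_pairs (V : Type*) [Fintype V] : #(pairs V) = (Fintype.card V).choose 2 := by
  rw [← Sym2.card_subtype_not_diag, Fintype.card_subtype, pairs]

variable {α V : Type*} {e e' : Sym2 α} {f g : α ↪ V}

theorem image_map_subset_pairs [Fintype V] [DecidableEq V] {S : Finset (Sym2 α)}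
    (hS : ∀ e ∈ S, ¬ e.IsDiag) (f : α ↪ V) : S.image (Sym2.map f) ⊆ pairs V :=
  image_subset_iff.2 fun e he => mem_pairs.2 (mt (Sym2.isDiag_map f.injective).1 (hS e he))

theorem card_embedding_le_pow (α V : Type*) [Fintype α] [Fintype V] [Fintype (α ↪ V)] :
    Fintype.card (α ↪ V) ≤ Fintype.card V ^ Fintype.card α := by
  rw [Fintype.card_embedding_eq]
  exact Nat.descFactorial_le_pow _ _

section Overlap

variable [Fintype α] [DecidableEq V]

/-- The vertices that `f` maps into the range of `g`. -/
def overlap (f g : α ↪ V) : Finset α :=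
  {v | f v ∈ univ.map g}

theorem mem_sym2_overlap (h : e.map f = e'.map g) : e ∈ (overlap f g).sym2 := by
  refine mem_sym2_iff.2 fun v hv => mem_filter.2 ⟨mem_univ v, ?_⟩
  have hfv : f v ∈ e'.map g := h ▸ Sym2.mem_map.2 ⟨v, hv, rfl⟩
  obtain ⟨u, -, hu⟩ := Sym2.mem_map.1 hfv
  exact hu ▸ mem_map_of_mem g (mem_univ u)

theorem sum_pow_card_overlap_le [Fintype V] (g : α ↪ V) :
    ∑ f : α ↪ V, Fintype.card V ^ #(overlap f g) ≤
      ((Fintype.card α + 1) * Fintype.card V) ^ Fintype.card α := by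
  set n := Fintype.card V
  have hvertex : ∑ y : V, (if y ∈ univ.map g then n else 1) ≤ (Fintype.card α + 1) * n :=
    calc ∑ y : V, (if y ∈ univ.map g then n else 1)
        ≤ ∑ y : V, ((if y ∈ univ.map g then n else 0) + 1) := by
          gcongr; split_ifs <;> omega
      _ = (Fintype.card α + 1) * n := by
          rw [sum_add_distrib, sum_ite_mem, univ_inter, sum_const, card_map, card_univ, sum_const,
            card_univ, smul_eq_mul, smul_eq_mul, mul_one, add_mul, one_mul]
  calc ∑ f : α ↪ V, n ^ #(overlap f g)
      = ∑ f : α ↪ V, ∏ v, (if f v ∈ univ.map g then n else 1) := by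
        simp only [overlap, prod_ite, prod_const, one_pow, mul_one]
    _ = ∑ f ∈ univ.map ⟨fun f : α ↪ V => ⇑f, DFunLike.coe_injective⟩,
          ∏ v, (if f v ∈ univ.map g then n else 1) := by rw [sum_map]; rfl
    _ ≤ ∑ f : α → V, ∏ v, (if f v ∈ univ.map g then n else 1) :=
        sum_le_sum_of_subset (subset_univ _)
    _ = (∑ y : V, (if y ∈ univ.map g then n else 1)) ^ Fintype.card α := by
        rw [← card_univ, ← prod_const, prod_univ_sum, Fintype.piFinset_univ]
    _ ≤ _ := by gcongr

theorem sum_sum_pow_card_overlap_le (α V : Type*) [Fintype α] [Fintype V] [DecidableEq V] :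
    ∑ g : α ↪ V, ∑ f : α ↪ V, Fintype.card V ^ #(overlap f g) ≤
      Fintype.card V ^ Fintype.card α *
        ((Fintype.card α + 1) * Fintype.card V) ^ Fintype.card α := by
  refine (sum_le_card_nsmul univ _ _ fun g _ => sum_pow_card_overlap_le g).trans ?_
  rw [card_univ, smul_eq_mul]
  exact Nat.mul_le_mul_right _ (card_embedding_le_pow α V)

variable [DecidableEq α]

theorem two_mul_card_le_card_union_add (S : Finset (Sym2 α)) (f g : α ↪ V) :
    2 * #S ≤ #(S.image (Sym2.map f) ∪ S.image (Sym2.map g)) + #(S ∩ (overlap f g).sym2) := by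
  have hinter : S.image (Sym2.map f) ∩ S.image (Sym2.map g) ⊆
      (S ∩ (overlap f g).sym2).image (Sym2.map f) := by
    intro x hx
    obtain ⟨hxf, hxg⟩ := mem_inter.1 hx
    obtain ⟨e, he, rfl⟩ := mem_image.1 hxf
    obtain ⟨e', -, he'⟩ := mem_image.1 hxg
    exact mem_image_of_mem _ (mem_inter.2 ⟨he, mem_sym2_overlap he'.symm⟩)
  have hcard := (card_le_card hinter).trans card_image_le
  have hunion := card_union_add_card_inter (S.image (Sym2.map f)) (S.image (Sym2.map g))
  rw [card_image_of_injective _ (Sym2.map.injective f.injective),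
    card_image_of_injective _ (Sym2.map.injective g.injective)] at hunion
  omega

end Overlap

section Collisions

variable [DecidableEq V]

/-- The pairs of embeddings in `F` that map `e` to the same edge. -/
def collisions (e : Sym2 α) (F : Finset (α ↪ V)) : Finset ((α ↪ V) × (α ↪ V)) :=
  {q ∈ F ×ˢ F | e.map q.1 = e.map q.2}

theorem collisions_mono {F F' : Finset (α ↪ V)} (h : F ⊆ F') :
    collisions e F ⊆ collisions e F' :=
  filter_subset_filter _ (product_subset_product h h)

theorem sum_card_fiber_sq_le (e : Sym2 α) (F : Finset (α ↪ V)) (X : Finset (Sym2 V)) :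
    ∑ x ∈ X, #(F.filter fun f : α ↪ V => e.map f = x) ^ 2 ≤ #(collisions e F) :=
  calc ∑ x ∈ X, #(F.filter fun f : α ↪ V => e.map f = x) ^ 2
      = ∑ x ∈ X, #{q ∈ collisions e F | e.map q.1 = x} := by
        refine sum_congr rfl fun x _ => ?_
        rw [sq, ← card_product]
        refine congrArg card (Finset.ext fun q => ?_)
        simp only [collisions, mem_filter, mem_product]
        exact ⟨fun h => ⟨⟨⟨h.1.1, h.2.1⟩, h.1.2.trans h.2.2.symm⟩, h.1.2⟩,
          fun h => ⟨⟨h.1.1.1, h.2⟩, h.1.1.2, h.1.2 ▸ h.2⟩⟩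
    _ = #{q ∈ collisions e F | e.map q.1 ∈ X} := sum_card_fiberwise_eq_card_filter _ _ _
    _ ≤ #(collisions e F) := card_filter_le _ _

variable [Fintype α] [Fintype V]

/-- The embeddings `α ↪ V` that map every edge in `S` to an edge in `X`. -/
noncomputable def embeddingsInto (S : Finset (Sym2 α)) (X : Finset (Sym2 V)) : Finset (α ↪ V) :=
  {f | ∀ e ∈ S, e.map f ∈ X}

theorem mem_embeddingsInto {S : Finset (Sym2 α)} {X : Finset (Sym2 V)} :
    f ∈ embeddingsInto S X ↔ ∀ e ∈ S, e.map f ∈ X := by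
  simp only [embeddingsInto, mem_filter, mem_univ, true_and]

theorem embeddingsInto_mono {S : Finset (Sym2 α)} {X Y : Finset (Sym2 V)} (h : X ⊆ Y) :
    embeddingsInto S X ⊆ embeddingsInto S Y :=
  fun _ hf => mem_embeddingsInto.2 fun e he => h (mem_embeddingsInto.1 hf e he)

theorem collisions_embeddingsInto (e : Sym2 α) (S : Finset (Sym2 α)) (X : Finset (Sym2 V)) :
    collisions e (embeddingsInto S X) =
      {q ∈ ({q | e.map q.1 = e.map q.2} : Finset ((α ↪ V) × (α ↪ V))) |
        S.image (Sym2.map q.1) ∪ S.image (Sym2.map q.2) ⊆ X} := by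
  ext q
  simp only [collisions, mem_filter, mem_product, mem_embeddingsInto, mem_univ, true_and,
    union_subset_iff, image_subset_iff]
  exact and_comm

variable {Ω : Type*} {s : Finset Ω} {R : Ω → Finset (Sym2 V)} {M : ℕ} {S : Finset (Sym2 α)}

theorem expect_card_embeddingsInto_le (h : IsUniformSubset s R (pairs V) M)
    (hS : ∀ e ∈ S, ¬ e.IsDiag) :
    𝔼 ω ∈ s, (#(embeddingsInto S (R ω)) : ℝ) ≤
      (Fintype.card V : ℝ) ^ Fintype.card α * ((M : ℝ) / #(pairs V)) ^ #S := by
  simp only [embeddingsInto, expect_card_filter]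
  calc ∑ f : α ↪ V, unifProb s (fun ω => ∀ e ∈ S, e.map f ∈ R ω)
      ≤ ∑ _f : α ↪ V, ((M : ℝ) / #(pairs V)) ^ #S := by
        gcongr with f
        rw [← card_image_of_injective S (Sym2.map.injective f.injective)]
        simpa only [image_subset_iff] using h.unifProb_subset_le (image_map_subset_pairs hS f)
    _ ≤ _ := by
        rw [sum_const, card_univ, nsmul_eq_mul]
        gcongr
        exact_mod_cast card_embedding_le_pow α V

theorem mul_unifProb_union_image_subset_le [DecidableEq α] (h : IsUniformSubset s R (pairs V) M)
    (hS : ∀ e ∈ S, ¬ e.IsDiag) {x : ℝ}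
    (hx : ∀ J : Finset α, e ∈ J.sym2 →
      x ≤ (Fintype.card V : ℝ) ^ #J * ((M : ℝ) / #(pairs V)) ^ (#(S ∩ J.sym2) + 1))
    (hfg : e.map f = e.map g) :
    x * unifProb s (fun ω => S.image (Sym2.map f) ∪ S.image (Sym2.map g) ⊆ R ω) ≤
      (Fintype.card V : ℝ) ^ #(overlap f g) * ((M : ℝ) / #(pairs V)) ^ (2 * #S + 1) := by
  rcases s.eq_empty_or_nonempty with rfl | hs
  · rw [unifProb, expect_empty, mul_zero]
    positivity
  set p : ℝ := (M : ℝ) / #(pairs V)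
  set U := S.image (Sym2.map f) ∪ S.image (Sym2.map g)
  set J := overlap f g
  have hp0 : 0 ≤ p := by positivity
  have hp1 : p ≤ 1 := div_le_one_of_le₀ (by exact_mod_cast h.le_card hs) (by positivity)
  have hU : U ⊆ pairs V := union_subset (image_map_subset_pairs hS f) (image_map_subset_pairs hS g)
  calc x * unifProb s (fun ω => U ⊆ R ω)
      ≤ (Fintype.card V : ℝ) ^ #J * p ^ (#(S ∩ J.sym2) + 1) * p ^ #U := by
        gcongr
        · exact unifProb_nonneg s _
        · exact hx J (mem_sym2_overlap hfg)
        · exact h.unifProb_subset_le hU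
    _ = (Fintype.card V : ℝ) ^ #J * p ^ (#U + #(S ∩ J.sym2) + 1) := by ring
    _ ≤ (Fintype.card V : ℝ) ^ #J * p ^ (2 * #S + 1) := by
        gcongr ?_ * ?_
        exact pow_le_pow_of_le_one hp0 hp1
          (Nat.succ_le_succ (two_mul_card_le_card_union_add S f g))

theorem mul_expect_card_collisions_le [DecidableEq α] (h : IsUniformSubset s R (pairs V) M)
    (hS : ∀ e ∈ S, ¬ e.IsDiag) {x : ℝ}
    (hx : ∀ J : Finset α, e ∈ J.sym2 →
      x ≤ (Fintype.card V : ℝ) ^ #J * ((M : ℝ) / #(pairs V)) ^ (#(S ∩ J.sym2) + 1)) :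
    x * 𝔼 ω ∈ s, (#(collisions e (embeddingsInto S (R ω))) : ℝ) ≤
      (Fintype.card α + 1 : ℝ) ^ Fintype.card α * (Fintype.card V : ℝ) ^ (2 * Fintype.card α) *
        ((M : ℝ) / #(pairs V)) ^ (2 * #S + 1) := by
  set n := Fintype.card V
  set a := Fintype.card α
  set p : ℝ := (M : ℝ) / #(pairs V)
  simp only [collisions_embeddingsInto]
  rw [expect_card_filter, mul_sum]
  calc _ ≤ ∑ q : (α ↪ V) × (α ↪ V) with e.map q.1 = e.map q.2,
          (n : ℝ) ^ #(overlap q.1 q.2) * p ^ (2 * #S + 1) :=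
        sum_le_sum fun q hq => mul_unifProb_union_image_subset_le h hS hx (mem_filter.1 hq).2
    _ ≤ ∑ q : (α ↪ V) × (α ↪ V), (n : ℝ) ^ #(overlap q.1 q.2) * p ^ (2 * #S + 1) :=
        sum_le_sum_of_subset_of_nonneg (filter_subset _ _) fun q _ _ => by positivity
    _ = (∑ g : α ↪ V, ∑ f : α ↪ V, (n : ℝ) ^ #(overlap f g)) * p ^ (2 * #S + 1) := by
        rw [← sum_mul, Fintype.sum_prod_type_right]
    _ ≤ (n ^ a * ((a + 1) * n) ^ a : ℝ) * p ^ (2 * #S + 1) := by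
        gcongr ?_ * _
        exact_mod_cast sum_sum_pow_card_overlap_le α V
    _ = _ := by
        rw [mul_pow, two_mul a, pow_add]
        ring

end Collisions

end Moments

section Density

open Finset

variable {V : Type} [DecidableEq V] {l : List (Sym2 V)} {e : Sym2 V} {d : ℝ}

theorem card_inter_sym2_le_edgesWithin_boardOf (hl : ∀ e ∈ l, ¬ e.IsDiag) (J : Finset V) :
    #(l.toFinset ∩ J.sym2) ≤ edgesWithin (boardOf l) J := by
  have hedges : (boardOf l).edgeSet ∩ {e | ∀ v ∈ e, v ∈ (J : Set V)} =
      ↑(l.toFinset ∩ J.sym2) := by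
    ext e
    simp only [boardOf, edgeSet_fromEdgeSet, Set.mem_inter_iff, Set.mem_sdiff, Set.mem_ofPred_eq,
      mem_coe, mem_inter, List.mem_toFinset, mem_sym2_iff, Sym2.mem_diagSet]
    exact ⟨fun h => ⟨h.1.1, h.2⟩, fun h => ⟨⟨h.1, hl e h.1⟩, h.2⟩⟩
  rw [edgesWithin, hedges, Set.ncard_coe_finset]

theorem mul_rpow_le_pow_mul_pow_of_densityLE (hl : ValidEdgeSeq (l ++ [e]))
    (hd : DensityLE (boardOf (l ++ [e])) d) {n p : ℝ} (hp0 : 0 < p) (hp1 : p ≤ 1)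
    (hnp : 1 ≤ n * p ^ d) {J : Finset V} (hJ : e ∈ J.sym2) :
    n * p ^ d ≤ n ^ #J * p ^ (#(l.toFinset ∩ J.sym2) + 1) := by
  have hJne : J.Nonempty := by
    induction e with | _ u v => exact ⟨u, mem_sym2_iff.1 hJ u (Sym2.mem_mk_left u v)⟩
  have hel : e ∉ l := fun h => List.disjoint_of_nodup_append hl.1 h (List.mem_singleton_self e)
  have hcard : #((l ++ [e]).toFinset ∩ J.sym2) = #(l.toFinset ∩ J.sym2) + 1 := by
    rw [List.toFinset_append, List.toFinset_cons, List.toFinset_nil, insert_empty_eq, union_comm,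
      singleton_union, insert_inter_of_mem hJ,
      card_insert_of_notMem fun h => hel (List.mem_toFinset.1 (mem_inter.1 h).1)]
  have hdense : ((#(l.toFinset ∩ J.sym2) + 1 : ℕ) : ℝ) ≤ d * #J := by
    rw [← hcard]
    exact (Nat.cast_le.2 (card_inter_sym2_le_edgesWithin_boardOf hl.2 J)).trans (hd J hJne)
  have hn : 0 ≤ n := nonneg_of_mul_nonneg_left (zero_le_one.trans hnp) (Real.rpow_pos_of_pos hp0 d)
  calc n * p ^ d
      ≤ (n * p ^ d) ^ #J := le_self_pow₀ hnp hJne.card_ne_zero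
    _ = n ^ #J * p ^ (d * #J) := by rw [mul_pow, Real.rpow_mul_natCast hp0.le]
    _ ≤ n ^ #J * p ^ (#(l.toFinset ∩ J.sym2) + 1) := by
        rw [← Real.rpow_natCast p]
        gcongr ?_ * ?_
        exact Real.rpow_le_rpow_of_exponent_ge hp0 hp1 hdense

end Density

section StrategyTree

variable {V : Type} {r k : ℕ} {d : ℝ}

theorem length_of_mem_nodeHistsAt {T : BuilderTree V r} {B : EdgeHistory V r}
    (hB : B ∈ T.nodeHistsAt k) : B.length = k := by
  induction k generalizing T B with
  | zero => cases T <;> exact congrArg List.length hB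
  | succ k ih =>
    cases T with
    | leaf => exact hB.elim
    | node e child =>
      obtain ⟨c, B', hB', rfl⟩ := Set.mem_iUnion.1 hB
      exact congrArg (· + 1) (ih hB')

theorem finite_nodeHistsAt (T : BuilderTree V r) (k : ℕ) : (T.nodeHistsAt k).Finite := by
  induction k generalizing T with
  | zero => cases T <;> exact Set.finite_singleton []
  | succ k ih =>
    cases T with
    | leaf => exact Set.finite_empty
    | node e child => exact Set.finite_iUnion fun c => (ih (child c)).image _

theorem validEdgeSeq_reverse_append_of_mem_nodeHistsAt {T : BuilderTree V r} {B : EdgeHistory V r}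
    {used : List (Sym2 V)} (hused : ValidEdgeSeq used) (hT : T.Proper used)
    (hB : B ∈ T.nodeHistsAt k) : ValidEdgeSeq ((B.map Prod.fst).reverse ++ used) := by
  induction k generalizing T B used with
  | zero => cases T <;> (obtain rfl : B = [] := hB; exact hused)
  | succ k ih =>
    cases T with
    | leaf => exact hB.elim
    | node e child =>
      obtain ⟨c, B', hB', rfl⟩ := Set.mem_iUnion.1 hB
      have hcons : ValidEdgeSeq (e :: used) :=
        ⟨List.nodup_cons.2 ⟨hT.2.1, hused.1⟩, List.forall_mem_cons.2 ⟨hT.1, hused.2⟩⟩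
      rw [List.map_cons, List.reverse_cons, List.append_assoc, List.singleton_append]
      exact ih hcons (hT.2.2 c) hB'

theorem validEdgeSeq_of_mem_nodeHistsAt {T : BuilderTree V r} {B : EdgeHistory V r}
    (hT : T.Proper []) (hB : B ∈ T.nodeHistsAt k) : ValidEdgeSeq (B.map Prod.fst) := by
  have hnil : ValidEdgeSeq ([] : List (Sym2 V)) := ⟨List.nodup_nil, fun _ h => by cases h⟩
  have hrev := validEdgeSeq_reverse_append_of_mem_nodeHistsAt hnil hT hB
  rw [List.append_nil] at hrev
  exact ⟨List.nodup_reverse.1 hrev.1, fun e he => hrev.2 e (List.mem_reverse.2 he)⟩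

theorem densityLE_union_of_mem_nodeHistsAt {T : BuilderTree V r} {B : EdgeHistory V r}
    {cur : Set (Sym2 V)} (hT : T.LegalDensity d cur) (hB : B ∈ T.nodeHistsAt (k + 1)) :
    DensityLE (fromEdgeSet (cur ∪ {e | e ∈ B.map Prod.fst})) d := by
  induction k generalizing T B cur with
  | zero =>
    cases T with
    | leaf => exact hB.elim
    | node e child =>
      obtain ⟨c, B', hB', rfl⟩ := Set.mem_iUnion.1 hB
      obtain rfl := List.length_eq_zero_iff.1 (length_of_mem_nodeHistsAt hB')
      convert hT.1 using 2
      ext x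
      simp [or_comm]
  | succ k ih =>
    cases T with
    | leaf => exact hB.elim
    | node e child =>
      obtain ⟨c, B', hB', rfl⟩ := Set.mem_iUnion.1 hB
      convert ih (hT.2 c) hB' using 2
      ext x
      simp only [List.map_cons, List.mem_cons, Set.mem_union, Set.mem_ofPred_eq, Set.mem_insert_iff]
      tauto

theorem densityLE_boardOf_of_mem_nodeHistsAt {T : BuilderTree V r} {B : EdgeHistory V r}
    (hT : T.LegalDensity d ∅) (hB : B ∈ T.nodeHistsAt (k + 1)) :
    DensityLE (boardOf (B.map Prod.fst)) d := by
  simpa only [boardOf, Set.empty_union] using densityLE_union_of_mem_nodeHistsAt hT hB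

theorem mem_leafHists_or_exists_append_mem_nodeHistsAt {T : BuilderTree V r}
    {B : EdgeHistory V r} (hB : B ∈ T.nodeHistsAt k) :
    B ∈ T.leafHists ∨ ∃ e, ∀ c, B ++ [(e, c)] ∈ T.nodeHistsAt (k + 1) := by
  induction k generalizing T B with
  | zero =>
    cases T with
    | leaf => exact Or.inl hB
    | node e child =>
      obtain rfl : B = [] := hB
      refine Or.inr ⟨e, fun c => Set.mem_iUnion.2 ⟨c, [], ?_, rfl⟩⟩
      cases child c <;> exact Set.mem_singleton []
  | succ k ih =>
    cases T with
    | leaf => exact hB.elim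
    | node e child =>
      obtain ⟨c, B', hB', rfl⟩ := Set.mem_iUnion.1 hB
      rcases ih hB' with hleaf | ⟨e', he'⟩
      · exact Or.inl (Set.mem_iUnion.2 ⟨c, B', hleaf, rfl⟩)
      · exact Or.inr ⟨e', fun c' => Set.mem_iUnion.2 ⟨c, B' ++ [(e', c')], he' c', rfl⟩⟩

end StrategyTree

section PainterRuns

variable {V : Type} {r : ℕ} (π : PainterStrategy V r)

theorem exists_runPainterAux_eq_append (h : EdgeHistory V r) (l : List (Sym2 V)) :
    ∃ h', runPainterAux π h l = h ++ h' ∧ h'.map Prod.fst = l := by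
  induction l generalizing h with
  | nil => exact ⟨[], (List.append_nil h).symm, rfl⟩
  | cons e l ih =>
    obtain ⟨h', hrun, hfst⟩ := ih (h ++ [(e, π h e)])
    exact ⟨(e, π h e) :: h', hrun.trans (List.append_assoc _ _ _), congrArg (List.cons e) hfst⟩

theorem runPainterAux_append (h : EdgeHistory V r) (l l' : List (Sym2 V)) :
    runPainterAux π h (l ++ l') = runPainterAux π (runPainterAux π h l) l' := by
  induction l generalizing h with
  | nil => rfl
  | cons _ _ ih => exact ih _

theorem exists_runPainter_append_eq (l l' : List (Sym2 V)) :
    ∃ h', runPainter π (l ++ l') = runPainter π l ++ h' ∧ h'.map Prod.fst = l' := by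
  rw [runPainter, runPainterAux_append]
  exact exists_runPainterAux_eq_append π _ l'

theorem map_fst_runPainter (l : List (Sym2 V)) : (runPainter π l).map Prod.fst = l := by
  obtain ⟨h', hrun, hfst⟩ := exists_runPainterAux_eq_append π [] l
  rwa [runPainter, hrun]

theorem runPainter_take_subset {l : List (Sym2 V)} {s t : ℕ} (hst : s ≤ t) :
    runPainter π (l.take s) ⊆ runPainter π (l.take t) := by
  obtain ⟨h', hrun, -⟩ := exists_runPainter_append_eq π (l.take s) ((l.take t).drop s)
  rw [← take_append_drop_take l hst, hrun]
  exact List.subset_append_left _ _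

end PainterRuns

section Copies

open Finset

variable {a n r : ℕ} {B : EdgeHistory (Fin a) r} {H H' h : EdgeHistory (Fin n) r} {e : Sym2 (Fin a)}
  {f : Fin a ↪ Fin n}

theorem mem_coloredCopies :
    f ∈ ColoredCopies B H ↔ ∀ x ∈ B, ¬ x.1.IsDiag → (x.1.map f, x.2) ∈ H := by
  simp only [ColoredCopies, colorGraph, fromEdgeSet_adj, Set.mem_ofPred_eq]
  constructor
  · rintro h ⟨⟨u, v⟩, c⟩ hx huv
    exact (h c u v ⟨hx, mt Sym2.mk_isDiag_iff.2 huv⟩).1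
  · exact fun h c u v huv =>
      ⟨h (s(u, v), c) huv.1 (mt Sym2.mk_isDiag_iff.1 huv.2), f.injective.ne huv.2⟩

theorem coloredCopies_mono (h : H ⊆ H') : ColoredCopies B H ⊆ ColoredCopies B H' :=
  fun _ hf => mem_coloredCopies.2 fun x hx hd => h (mem_coloredCopies.1 hf x hx hd)

theorem hasLeafCopy_mono {T : BuilderTree (Fin a) r} (h : H ⊆ H') (hT : HasLeafCopy T H) :
    HasLeafCopy T H' :=
  hT.imp fun _ hB => ⟨hB.1, hB.2.mono (coloredCopies_mono h)⟩

/-- `ColoredCopies B H` as a finite set. -/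
noncomputable def copies (B : EdgeHistory (Fin a) r) (H : EdgeHistory (Fin n) r) :
    Finset (Fin a ↪ Fin n) :=
  (ColoredCopies B H).toFinset

theorem mem_copies : f ∈ copies B H ↔ f ∈ ColoredCopies B H := Set.mem_toFinset

theorem ncard_coloredCopies : (ColoredCopies B H).ncard = #(copies B H) :=
  Set.ncard_eq_toFinset_card' _

theorem copies_subset_embeddingsInto (hB : ∀ e ∈ B.map Prod.fst, ¬ e.IsDiag) :
    copies B H ⊆ embeddingsInto (B.map Prod.fst).toFinset (H.map Prod.fst).toFinset := by
  intro f hf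
  refine mem_embeddingsInto.2 fun e he => ?_
  obtain ⟨x, hx, rfl⟩ := List.mem_map.1 (List.mem_toFinset.1 he)
  have hfx := mem_coloredCopies.1 (mem_copies.1 hf) x hx (hB _ (List.mem_map_of_mem hx))
  exact List.mem_toFinset.2 (List.mem_map_of_mem hfx)

theorem mem_copies_append_singleton {c : Fin r} (hf : f ∈ copies B H) (he : (e.map f, c) ∈ h) :
    f ∈ copies (B ++ [(e, c)]) (H ++ h) := by
  refine mem_copies.2 (mem_coloredCopies.2 fun x hx hd => ?_)
  rcases List.mem_append.1 hx with hxB | hxe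
  · exact List.mem_append_left _ (mem_coloredCopies.1 (mem_copies.1 hf) x hxB hd)
  · obtain rfl := List.mem_singleton.1 hxe
    exact List.mem_append_right _ he

/-- The number of copies of `B` in `H` that `x` would extend by the edge `e`. -/
noncomputable def extensionWeight (B : EdgeHistory (Fin a) r) (e : Sym2 (Fin a))
    (H : EdgeHistory (Fin n) r) (x : Sym2 (Fin n)) : ℕ :=
  #((copies B H).filter fun f : Fin a ↪ Fin n => e.map f = x)

theorem sum_extensionWeight (X : Finset (Sym2 (Fin n))) :
    ∑ x ∈ X, extensionWeight B e H x =
      #((copies B H).filter fun f : Fin a ↪ Fin n => e.map f ∈ X) :=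
  sum_card_fiberwise_eq_card_filter _ _ _

theorem sum_extensionWeight_le_sum_card_copies :
    ∑ x ∈ (h.map Prod.fst).toFinset, extensionWeight B e H x ≤
      ∑ c, #(copies (B ++ [(e, c)]) (H ++ h)) := by
  have hsub : ((copies B H).filter fun f : Fin a ↪ Fin n => e.map f ∈ (h.map Prod.fst).toFinset) ⊆
      univ.biUnion fun c => copies (B ++ [(e, c)]) (H ++ h) := fun f hf => by
    obtain ⟨hfB, hfe⟩ := mem_filter.1 hf
    obtain ⟨⟨x, c⟩, hx, hxe⟩ := List.mem_map.1 (List.mem_toFinset.1 hfe)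
    subst hxe
    exact mem_biUnion.2 ⟨c, mem_univ c, mem_copies_append_singleton hfB hx⟩
  rw [sum_extensionWeight]
  exact (card_le_card hsub).trans card_biUnion_le

theorem sum_extensionWeight_sq_le (hB : ∀ x ∈ B.map Prod.fst, ¬ x.IsDiag)
    (X : Finset (Sym2 (Fin n))) :
    ∑ x ∈ X, extensionWeight B e H x ^ 2 ≤
      #(collisions e (embeddingsInto (B.map Prod.fst).toFinset (H.map Prod.fst).toFinset)) :=
  (sum_card_fiber_sq_le e _ X).trans
    (card_le_card (collisions_mono (copies_subset_embeddingsInto hB)))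

theorem card_copies_le_sum_extensionWeight_add (hB : ∀ x ∈ B.map Prod.fst, ¬ x.IsDiag)
    (he : ¬ e.IsDiag) :
    #(copies B H) ≤
      ∑ x ∈ pairs (Fin n) \ (H.map Prod.fst).toFinset, extensionWeight B e H x +
        #(embeddingsInto (B.map Prod.fst ++ [e]).toFinset (H.map Prod.fst).toFinset) := by
  rw [sum_extensionWeight,
    ← card_filter_add_card_filter_not
      (p := fun f : Fin a ↪ Fin n => e.map f ∉ (H.map Prod.fst).toFinset)]
  gcongr ?_ + ?_
  · refine card_le_card fun f hf => ?_
    obtain ⟨hfB, hfe⟩ := mem_filter.1 hf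
    refine mem_filter.2 ⟨hfB, mem_sdiff.2 ⟨?_, hfe⟩⟩
    exact mem_pairs.2 (mt (Sym2.isDiag_map f.injective).1 he)
  · refine card_le_card fun f hf => mem_embeddingsInto.2 fun x hx => ?_
    obtain ⟨hfB, hfe⟩ := mem_filter.1 hf
    rcases List.mem_append.1 (List.mem_toFinset.1 hx) with hxB | hxe
    · exact mem_embeddingsInto.1 (copies_subset_embeddingsInto hB hfB) x (List.mem_toFinset.2 hxB)
    · obtain rfl := List.mem_singleton.1 hxe
      exact not_not.1 hfe

end Copies

section Round

open Finset

variable {a n N r s t : ℕ} {B : EdgeHistory (Fin a) r} {e : Sym2 (Fin a)}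
  (π : PainterStrategy (Fin n) r) (F : Fin N → Sym2 (Fin n))

/-- The colored board after `t` steps of the game in which the edges of `F` appear in order. -/
noncomputable def board (t : ℕ) : EdgeHistory (Fin n) r :=
  runPainter π ((List.ofFn F).take t)

theorem map_fst_board : (board π F t).map Prod.fst = (List.ofFn F).take t :=
  map_fst_runPainter π _

theorem board_eq_runPainter : board π F N = runPainter π (List.ofFn F) := by
  rw [board, List.take_of_length_le (List.length_ofFn.le)]

theorem board_subset (hst : s ≤ t) : board π F s ⊆ board π F t :=
  runPainter_take_subset π hst

theorem sum_window_extensionWeight_le (hst : s ≤ t) :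
    ∑ x ∈ window F s t, extensionWeight B e (board π F s) x ≤
      ∑ c, #(copies (B ++ [(e, c)]) (board π F t)) := by
  obtain ⟨h, hrun, hfst⟩ := exists_runPainter_append_eq π ((List.ofFn F).take s)
    (((List.ofFn F).take t).drop s)
  rw [window, ← hfst, board, board, ← take_append_drop_take _ hst, hrun]
  exact sum_extensionWeight_le_sum_card_copies

theorem unifProb_window_extensionWeight_lt_le (hBe : ∀ x ∈ B.map Prod.fst ++ [e], ¬ x.IsDiag)
    (hst : s < t) (ht : t ≤ N) {b v : ℝ} (hb : 0 < b) (hv : 0 ≤ v) :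
    unifProb (injSeqs (pairs (Fin n)) N) (fun F =>
      2 * b ≤ #(copies B (board π F s)) ∧
      ∑ x ∈ window F s t, (extensionWeight B e (board π F s) x : ℝ) <
        ((t - s : ℕ) : ℝ) / #(pairs (Fin n)) * b / 2) ≤
    unifProb (injSeqs (pairs (Fin n)) N) (fun F =>
      b < #(embeddingsInto ((B.map Prod.fst ++ [e]).toFinset) (List.ofFn F).toFinset)) +
    unifProb (injSeqs (pairs (Fin n)) N) (fun F =>
      v < #(collisions e (embeddingsInto (B.map Prod.fst).toFinset (List.ofFn F).toFinset))) +
    4 * v / (((t - s : ℕ) : ℝ) / #(pairs (Fin n)) * b ^ 2) := by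
  obtain ⟨hB, he⟩ := List.forall_mem_append.1 hBe
  replace he := he e (List.mem_singleton_self e)
  have hcheb := unifProb_window_sum_lt_le (A := pairs (Fin n)) hst ht
    (w := fun l x => (extensionWeight B e (runPainter π l) x : ℝ)) (fun _ _ => Nat.cast_nonneg _)
    hb hv
  refine (unifProb_mono ?_).trans ((unifProb_or_le _ _ _).trans
    (add_le_add (unifProb_or_le _ _ _) hcheb))
  rintro F - ⟨hcopies, hsum⟩
  have htake : ((List.ofFn F).take s).toFinset ⊆ (List.ofFn F).toFinset :=
    fun x hx => List.mem_toFinset.2 (List.mem_of_mem_take (List.mem_toFinset.1 hx))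
  by_cases hmany : b < #(embeddingsInto ((B.map Prod.fst ++ [e]).toFinset) (List.ofFn F).toFinset)
  · exact Or.inl (Or.inl hmany)
  by_cases hcoll :
      v < #(collisions e (embeddingsInto (B.map Prod.fst).toFinset (List.ofFn F).toFinset))
  · exact Or.inl (Or.inr hcoll)
  refine Or.inr ⟨?_, ?_, hsum⟩
  · have hsplit := card_copies_le_sum_extensionWeight_add (H := board π F s) hB he
    rw [map_fst_board] at hsplit
    have hmono := card_le_card
      (embeddingsInto_mono (S := (B.map Prod.fst ++ [e]).toFinset) htake)
    have hle := Nat.cast_le (α := ℝ).2 (hsplit.trans (Nat.add_le_add_left hmono _))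
    push_cast at hle
    change b ≤ ∑ x ∈ _, (extensionWeight B e (board π F s) x : ℝ)
    linarith
  · have hsq := sum_extensionWeight_sq_le (e := e) (H := board π F s) hB
      (pairs (Fin n) \ ((List.ofFn F).take s).toFinset)
    rw [map_fst_board] at hsq
    have hmono := card_le_card (collisions_mono (e := e)
      (embeddingsInto_mono (S := (B.map Prod.fst).toFinset) htake))
    have hle := Nat.cast_le (α := ℝ).2 (hsq.trans hmono)
    push_cast at hle
    exact hle.trans (not_lt.1 hcoll)

/-- The density of a graph with `N` edges on `n` vertices: the ratio of `N` to `n.choose 2`. -/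
noncomputable def pairDensity (n N : ℕ) : ℝ :=
  N / #(pairs (Fin n))

theorem pairDensity_nonneg (n N : ℕ) : 0 ≤ pairDensity n N := by
  rw [pairDensity]
  positivity

theorem unifProb_few_extended_copies_le (hBe : ∀ x ∈ B.map Prod.fst ++ [e], ¬ x.IsDiag)
    (hst : s < t) (ht : t ≤ N) (hr : 0 < r) (hp : 0 < pairDensity n N) {κ b v : ℝ} (hκ : 0 < κ)
    (hκN : κ * N ≤ (t - s : ℕ)) (hb : 0 < b) (hv : 0 ≤ v) :
    unifProb (injSeqs (pairs (Fin n)) N) (fun F =>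
      2 * b ≤ #(copies B (board π F s)) ∧
      ∀ c, #(copies (B ++ [(e, c)]) (board π F t)) < κ * pairDensity n N * b / (2 * r)) ≤
    unifProb (injSeqs (pairs (Fin n)) N) (fun F =>
      b < #(embeddingsInto (B.map Prod.fst ++ [e]).toFinset (List.ofFn F).toFinset)) +
    unifProb (injSeqs (pairs (Fin n)) N) (fun F =>
      v < #(collisions e (embeddingsInto (B.map Prod.fst).toFinset (List.ofFn F).toFinset))) +
    4 * v / (κ * pairDensity n N * b ^ 2) := by
  have hq : κ * pairDensity n N ≤ ((t - s : ℕ) : ℝ) / #(pairs (Fin n)) := by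
    rw [pairDensity, ← mul_div_assoc]
    exact div_le_div_of_nonneg_right hκN (Nat.cast_nonneg _)
  refine le_trans (unifProb_mono ?_)
    ((unifProb_window_extensionWeight_lt_le π hBe hst ht hb hv).trans (by gcongr))
  rintro F - ⟨hcopies, hext⟩
  refine ⟨hcopies, ?_⟩
  have hwindow := sum_window_extensionWeight_le (B := B) (e := e) π F hst.le
  calc ∑ x ∈ window F s t, (extensionWeight B e (board π F s) x : ℝ)
      ≤ ∑ c, (#(copies (B ++ [(e, c)]) (board π F t)) : ℝ) := by exact_mod_cast hwindow
    _ < ∑ _c : Fin r, κ * pairDensity n N * b / (2 * r) :=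
        sum_lt_sum_of_nonempty ⟨⟨0, hr⟩, mem_univ _⟩ fun c _ => hext c
    _ = κ * pairDensity n N * b / 2 := by
        rw [sum_const, card_univ, Fintype.card_fin, nsmul_eq_mul]
        field_simp
    _ ≤ ((t - s : ℕ) : ℝ) / #(pairs (Fin n)) * b / 2 := by gcongr

section Markov

variable {l : List (Sym2 (Fin a))} {x : ℝ}

theorem unifProb_lt_card_embeddingsInto_le (hl : ValidEdgeSeq l) (hn : 0 < n)
    (hp : 0 < pairDensity n N) (hx : 0 < x) :
    unifProb (injSeqs (pairs (Fin n)) N) (fun F => x * (n ^ a * pairDensity n N ^ l.length) <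
      #(embeddingsInto l.toFinset (List.ofFn F).toFinset)) ≤ x⁻¹ := by
  have hexpect := expect_card_embeddingsInto_le
    (isUniformSubset_toFinset_ofFn (pairs (Fin n)) N) fun e he => hl.2 e (List.mem_toFinset.1 he)
  rw [Fintype.card_fin, Fintype.card_fin, List.toFinset_card_of_nodup hl.1, ← pairDensity]
    at hexpect
  have hmarkov := mul_unifProb_lt_le_expect (s := injSeqs (pairs (Fin n)) N)
    (Y := fun F => (#(embeddingsInto l.toFinset (List.ofFn F).toFinset) : ℝ))
    (fun _ _ => Nat.cast_nonneg _) (x * (n ^ a * pairDensity n N ^ l.length))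
  have hD : 0 < (n : ℝ) ^ a * pairDensity n N ^ l.length := by positivity
  rw [← one_div, le_div_iff₀ hx]
  refine le_of_mul_le_mul_right ?_ hD
  rw [one_mul, mul_assoc, mul_comm]
  exact hmarkov.trans hexpect

theorem unifProb_lt_card_collisions_le (hl : ValidEdgeSeq l) (hn : 0 < n)
    (hp : 0 < pairDensity n N) {ω : ℝ} (hω : 0 < ω) (hx : 0 < x)
    (hJ : ∀ J : Finset (Fin a), e ∈ J.sym2 →
      ω ≤ n ^ #J * pairDensity n N ^ (#(l.toFinset ∩ J.sym2) + 1)) :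
    unifProb (injSeqs (pairs (Fin n)) N) (fun F =>
      x * ((n ^ a * pairDensity n N ^ l.length) ^ 2 * pairDensity n N) <
        #(collisions e (embeddingsInto l.toFinset (List.ofFn F).toFinset))) ≤
      (a + 1) ^ a / (ω * x) := by
  set p := pairDensity n N with hpdef
  have hexpect := mul_expect_card_collisions_le (x := ω) (e := e) (S := l.toFinset)
    (isUniformSubset_toFinset_ofFn (pairs (Fin n)) N) (fun y hy => hl.2 y (List.mem_toFinset.1 hy))
    (fun J heJ => by rw [Fintype.card_fin, ← pairDensity]; exact hJ J heJ)
  rw [Fintype.card_fin, Fintype.card_fin, List.toFinset_card_of_nodup hl.1, ← pairDensity,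
    ← hpdef] at hexpect
  have hmarkov := mul_unifProb_lt_le_expect (s := injSeqs (pairs (Fin n)) N)
    (Y := fun F => (#(collisions e (embeddingsInto l.toFinset (List.ofFn F).toFinset)) : ℝ))
    (fun _ _ => Nat.cast_nonneg _) (x * ((n ^ a * p ^ l.length) ^ 2 * p))
  have hD : 0 < ((n : ℝ) ^ a * p ^ l.length) ^ 2 * p := by positivity
  rw [le_div_iff₀ (mul_pos hω hx)]
  refine le_of_mul_le_mul_left ?_ hD
  calc ((n : ℝ) ^ a * p ^ l.length) ^ 2 * p * (unifProb _ _ * (ω * x))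
      = ω * (x * ((n ^ a * p ^ l.length) ^ 2 * p) * unifProb _ _) := by ring
    _ ≤ (a + 1) ^ a * n ^ (2 * a) * p ^ (2 * l.length + 1) :=
        (mul_le_mul_of_nonneg_left hmarkov hω.le).trans hexpect
    _ = (n ^ a * p ^ l.length) ^ 2 * p * (a + 1) ^ a := by ring

end Markov

theorem unifProb_many_copies_few_extended_copies_le {d c κ : ℝ}
    (hBe : ValidEdgeSeq (B.map Prod.fst ++ [e]))
    (hd : DensityLE (boardOf (B.map Prod.fst ++ [e])) d) (hst : s < t) (ht : t ≤ N)
    (hc : 0 < c) (hκ : 0 < κ) (hκN : κ * N ≤ (t - s : ℕ)) (hr : 0 < r)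
    (hp0 : 0 < pairDensity n N) (hp1 : pairDensity n N ≤ 1)
    (hω : 1 ≤ n * pairDensity n N ^ d) :
    unifProb (injSeqs (pairs (Fin n)) N) (fun F =>
      c * (n ^ a * pairDensity n N ^ B.length) ≤ #(copies B (board π F s)) ∧
      ∀ i, #(copies (B ++ [(e, i)]) (board π F t)) <
        κ * c / (4 * r) * (n ^ a * pairDensity n N ^ (B.length + 1))) ≤
    2 / c * pairDensity n N +
      ((a + 1) ^ a + 16 / (κ * c ^ 2)) * (√(n * pairDensity n N ^ d))⁻¹ := by
  set p := pairDensity n N with hpdef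
  set ω : ℝ := n * p ^ d
  set D : ℝ := n ^ a * p ^ B.length with hDdef
  have hn : 0 < n := Nat.pos_of_ne_zero fun h => by norm_num [ω, h] at hω
  have hω0 : 0 < ω := zero_lt_one.trans_le hω
  have hD : 0 < D := by positivity
  have hB : ValidEdgeSeq (B.map Prod.fst) :=
    ⟨hBe.1.of_append_left, (List.forall_mem_append.1 hBe.2).1⟩
  have hmany := unifProb_lt_card_embeddingsInto_le hBe hn hp0 (x := c / (2 * p)) (by positivity)
  have hcoll := unifProb_lt_card_collisions_le hB hn hp0 hω0 (inv_pos.2 (Real.sqrt_pos.2 hω0))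
    fun J hJ => mul_rpow_le_pow_mul_pow_of_densityLE hBe hd hp0 hp1 hω hJ
  have hfew := unifProb_few_extended_copies_le π hBe.2 hst ht hr hp0 hκ hκN (b := c / 2 * D)
    (v := (√ω)⁻¹ * (D ^ 2 * p)) (by positivity) (by positivity)
  have hb : c / (2 * p) * (n ^ a * p ^ (B.map Prod.fst ++ [e]).length) = c / 2 * D := by
    rw [List.length_append, List.length_map, List.length_singleton, hDdef, pow_succ]
    field_simp
  have hsqrt : ω * (√ω)⁻¹ = √ω := by rw [← div_eq_mul_inv, Real.div_sqrt]
  have htarget :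
      κ * c / (4 * r) * (n ^ a * p ^ (B.length + 1)) = κ * p * (c / 2 * D) / (2 * r) := by
    rw [hDdef, pow_succ]
    ring
  rw [← hpdef, hb] at hmany
  rw [List.length_map, ← hDdef, hsqrt] at hcoll
  rw [htarget, show c * D = 2 * (c / 2 * D) by ring]
  calc _ ≤ _ := hfew
    _ ≤ (c / (2 * p))⁻¹ + (a + 1) ^ a / √ω +
          4 * ((√ω)⁻¹ * (D ^ 2 * p)) / (κ * p * (c / 2 * D) ^ 2) := by gcongr
    _ = (c / (2 * p))⁻¹ + (a + 1) ^ a / √ω + 16 / (κ * c ^ 2) * (√ω)⁻¹ := by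
        congr 1
        field_simp
        norm_num
    _ = 2 / c * p + ((a + 1) ^ a + 16 / (κ * c ^ 2)) * (√ω)⁻¹ := by
        rw [inv_div]
        ring

end Round

section PairDensity

open Finset

variable {a n N : ℕ}

theorem div_sq_le_pairDensity (hn : 2 ≤ n) : (N : ℝ) / n ^ 2 ≤ pairDensity n N := by
  have hcard : (0 : ℝ) < n.choose 2 := by exact_mod_cast Nat.choose_pos hn
  rw [pairDensity, card_pairs, Fintype.card_fin]
  gcongr
  exact_mod_cast Nat.choose_le_pow n 2

theorem pairDensity_le_mul_div_sq (hn : 2 ≤ n) : pairDensity n N ≤ 4 * ((N : ℝ) / n ^ 2) := by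
  have hn' : (2 : ℝ) ≤ n := by exact_mod_cast hn
  have hcard : (n : ℝ) ^ 2 / 4 ≤ n.choose 2 := by
    rw [Nat.cast_choose_two]
    nlinarith
  calc pairDensity n N
      ≤ N / (n ^ 2 / 4) := by
        rw [pairDensity, card_pairs, Fintype.card_fin]
        gcongr
    _ = 4 * (N / n ^ 2) := by field_simp

theorem tendsto_pairDensity_zero {N : ℕ → ℕ}
    (hN : (fun n => (N n : ℝ)) =o[atTop] (fun n => (n : ℝ) ^ 2)) :
    Tendsto (fun n => pairDensity n (N n)) atTop (nhds 0) := by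
  have hlim := hN.tendsto_div_nhds_zero.const_mul 4
  rw [mul_zero] at hlim
  exact squeeze_zero' (.of_forall fun n => pairDensity_nonneg n (N n))
    ((eventually_ge_atTop 2).mono fun n hn => pairDensity_le_mul_div_sq hn) hlim

theorem mul_div_sq_rpow_eq {d : ℝ} (hd : 0 < d) (hn : 0 < n) :
    n * ((N : ℝ) / n ^ 2) ^ d = (N / (n : ℝ) ^ (2 - 1 / d)) ^ d := by
  have hn' : (0 : ℝ) < n := by exact_mod_cast hn
  have hpow : ((n : ℝ) ^ (2 - 1 / d)) ^ d * n = ((n : ℝ) ^ 2) ^ d := by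
    rw [← Real.rpow_mul hn'.le, sub_mul, one_div_mul_cancel hd.ne', Real.rpow_sub_one hn'.ne',
      div_mul_cancel₀ _ hn'.ne', Real.rpow_mul hn'.le, Real.rpow_two]
  rw [Real.div_rpow N.cast_nonneg (by positivity), Real.div_rpow N.cast_nonneg (by positivity),
    ← hpow]
  field_simp

theorem tendsto_mul_pairDensity_rpow_atTop {d : ℝ} (hd : 0 < d) {N : ℕ → ℕ}
    (hN : (fun n : ℕ => (n : ℝ) ^ (2 - 1 / d)) =o[atTop] (fun n => (N n : ℝ))) :
    Tendsto (fun n => n * pairDensity n (N n) ^ d) atTop atTop := by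
  have hpos : ∀ᶠ n : ℕ in atTop, 0 < (n : ℝ) ^ (2 - 1 / d) / N n := by
    filter_upwards [hN.bound one_pos, eventually_gt_atTop 0] with n hle hn
    have hpow : 0 < (n : ℝ) ^ (2 - 1 / d) := Real.rpow_pos_of_pos (by exact_mod_cast hn) _
    rw [one_mul, Real.norm_of_nonneg hpow.le, Real.norm_natCast] at hle
    exact div_pos hpow (hpow.trans_le hle)
  have hratio : Tendsto (fun n => (N n : ℝ) / (n : ℝ) ^ (2 - 1 / d)) atTop atTop :=
    (tendsto_nhdsWithin_iff.2 ⟨hN.tendsto_div_nhds_zero, hpos⟩).inv_tendsto_nhdsGT_zero.congr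
      fun _ => inv_div _ _
  refine tendsto_atTop_mono' _ ?_ ((tendsto_rpow_atTop hd).comp hratio)
  filter_upwards [eventually_ge_atTop 2] with n hn
  rw [Function.comp_apply, ← mul_div_sq_rpow_eq hd (zero_lt_two.trans_le hn)]
  gcongr
  exact div_sq_le_pairDensity hn

theorem eventually_pairDensity_pos {d : ℝ} (hd : 0 < d) {N : ℕ → ℕ}
    (hω : Tendsto (fun n => n * pairDensity n (N n) ^ d) atTop atTop) :
    ∀ᶠ n in atTop, 0 < pairDensity n (N n) := by
  filter_upwards [hω.eventually_gt_atTop 0] with n hn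
  refine (pairDensity_nonneg n (N n)).lt_of_ne' fun h => ?_
  rw [h, Real.zero_rpow hd.ne', mul_zero] at hn
  exact hn.false

theorem tendsto_atTop_of_densityLE_boardOf {d : ℝ} (hd : 0 < d) {N : ℕ → ℕ}
    (hp : Tendsto (fun n => pairDensity n (N n)) atTop (nhds 0))
    (hω : Tendsto (fun n => n * pairDensity n (N n) ^ d) atTop atTop)
    {l : List (Sym2 (Fin a))} {e : Sym2 (Fin a)} (hl : ValidEdgeSeq (l ++ [e]))
    (hdens : DensityLE (boardOf (l ++ [e])) d) : Tendsto N atTop atTop := by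
  refine tendsto_natCast_atTop_iff.1 ((tendsto_const_mul_atTop_of_pos (r := (4 : ℝ)) four_pos).1
    (tendsto_atTop_mono' _ ?_ hω))
  filter_upwards [eventually_pairDensity_pos hd hω, hp.eventually_le_const one_pos,
    hω.eventually_ge_atTop 1, eventually_ge_atTop 2] with n hp0 hp1 hω1 hn
  have hmem : e ∈ e.toFinset.sym2 := mem_sym2_iff.2 fun v hv => Sym2.mem_toFinset.2 hv
  have he : ¬ e.IsDiag := hl.2 e (List.mem_append_right _ (List.mem_singleton_self e))
  calc n * pairDensity n (N n) ^ d
      ≤ n ^ #e.toFinset * pairDensity n (N n) ^ (#(l.toFinset ∩ e.toFinset.sym2) + 1) :=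
        mul_rpow_le_pow_mul_pow_of_densityLE hl hdens hp0 hp1 hω1 hmem
    _ ≤ n ^ 2 * (4 * (N n / n ^ 2)) := by
        rw [Sym2.card_toFinset_of_not_isDiag e he]
        gcongr
        exact (pow_le_of_le_one hp0.le hp1 (Nat.succ_ne_zero _)).trans
          (pairDensity_le_mul_div_sq hn)
    _ = 4 * N n := by field_simp

end PairDensity

section LeafOrManyCopies

open Finset

variable {a n r k : ℕ} {T : BuilderTree (Fin a) r} {x y : ℝ} {H : EdgeHistory (Fin n) r}

/-- The alternative established at depth `k` of the strategy tree `T`: the colored board `H`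
contains a copy of some leaf, or at least `x` copies of some node at depth `k`. -/
def HasLeafOrManyCopies (T : BuilderTree (Fin a) r) (k : ℕ) (x : ℝ) (H : EdgeHistory (Fin n) r) :
    Prop :=
  HasLeafCopy T H ∨ ∃ B ∈ T.nodeHistsAt k, x ≤ ((ColoredCopies B H).ncard : ℝ)

theorem HasLeafOrManyCopies.of_le (h : HasLeafOrManyCopies T k x H) (hyx : y ≤ x) :
    HasLeafOrManyCopies T k y H :=
  h.imp_right fun ⟨B, hB, hx⟩ => ⟨B, hB, hyx.trans hx⟩

theorem half_pow_le_card_copies_nil (ha : 2 * a ≤ n) :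
    (1 / 2 : ℝ) ^ a * n ^ a ≤ #(copies (a := a) [] H) := by
  have huniv : copies (a := a) [] H = univ :=
    eq_univ_iff_forall.2 fun f => mem_copies.2 (mem_coloredCopies.2 fun _ h => by cases h)
  have hdesc : ((n + 1 - a : ℕ) : ℝ) ^ a ≤ n.descFactorial a := by
    exact_mod_cast Nat.pow_sub_le_descFactorial n a
  have ha' : (2 : ℝ) * a ≤ n := by exact_mod_cast ha
  rw [huniv, card_univ, Fintype.card_embedding_eq, Fintype.card_fin, Fintype.card_fin, ← mul_pow]
  refine le_trans (pow_le_pow_left₀ (by positivity) ?_ a) hdesc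
  rw [Nat.cast_sub (by omega)]
  push_cast
  linarith

theorem hasLeafOrManyCopies_zero (ha : 2 * a ≤ n) :
    HasLeafOrManyCopies T 0 ((1 / 2) ^ a * n ^ a) H := by
  refine Or.inr ⟨[], by cases T <;> exact Set.mem_singleton [], ?_⟩
  rw [ncard_coloredCopies]
  exact half_pow_le_card_copies_nil ha

end LeafOrManyCopies

section Induction

open Finset

variable {a r k : ℕ} {d : ℝ} {N : ℕ → ℕ} (π : (n : ℕ) → PainterStrategy (Fin n) r)

theorem tendsto_unifProb_many_copies_few_extended_copies {B : EdgeHistory (Fin a) r}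
    {e : Sym2 (Fin a)} {c κ : ℝ} {s t : ℕ → ℕ} (hd : 0 < d)
    (hp : Tendsto (fun n => pairDensity n (N n)) atTop (nhds 0))
    (hω : Tendsto (fun n => n * pairDensity n (N n) ^ d) atTop atTop)
    (hBe : ValidEdgeSeq (B.map Prod.fst ++ [e]))
    (hdens : DensityLE (boardOf (B.map Prod.fst ++ [e])) d) (hr : 0 < r) (hc : 0 < c)
    (hκ : 0 < κ) (ht : ∀ n, t n ≤ N n) (hκN : ∀ᶠ n in atTop, κ * N n ≤ (t n - s n : ℕ)) :
    Tendsto (fun n => unifProb (injSeqs (pairs (Fin n)) (N n)) (fun F =>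
      c * (n ^ a * pairDensity n (N n) ^ B.length) ≤ #(copies B (board (π n) F (s n))) ∧
      ∀ i, #(copies (B ++ [(e, i)]) (board (π n) F (t n))) <
        κ * c / (4 * r) * (n ^ a * pairDensity n (N n) ^ (B.length + 1)))) atTop (nhds 0) := by
  have hsqrt : Tendsto (fun n => (√(n * pairDensity n (N n) ^ d))⁻¹) atTop (nhds 0) :=
    (Real.tendsto_sqrt_atTop.comp hω).inv_tendsto_atTop
  have hbound : Tendsto (fun n => 2 / c * pairDensity n (N n) +
      ((a + 1) ^ a + 16 / (κ * c ^ 2)) * (√(n * pairDensity n (N n) ^ d))⁻¹) atTop (nhds 0) := by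
    simpa only [mul_zero, add_zero] using (hp.const_mul _).add (hsqrt.const_mul _)
  refine squeeze_zero' (.of_forall fun _ => unifProb_nonneg _ _) ?_ hbound
  filter_upwards [eventually_pairDensity_pos hd hω, hp.eventually_le_const one_pos,
    hω.eventually_ge_atTop 1, hκN, tendsto_atTop_of_densityLE_boardOf hd hp hω hBe hdens
      |>.eventually_gt_atTop 0] with n hp0 hp1 hω1 hκn hN
  have hst : s n < t n := by
    have hwindow : (0 : ℝ) < (t n - s n : ℕ) :=
      (mul_pos hκ (Nat.cast_pos.2 hN)).trans_le hκn
    exact Nat.sub_pos_iff_lt.1 (Nat.cast_pos.1 hwindow)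
  exact unifProb_many_copies_few_extended_copies_le (π n) hBe hdens hst (ht n) hc hκ hκn hr hp0
    hp1 hω1

theorem tendsto_unifProb_many_copies_not_hasLeafOrManyCopies {T : BuilderTree (Fin a) r}
    {B : EdgeHistory (Fin a) r} {c δ : ℝ} {t : ℕ → ℕ} (hd : 0 < d)
    (hp : Tendsto (fun n => pairDensity n (N n)) atTop (nhds 0))
    (hω : Tendsto (fun n => n * pairDensity n (N n) ^ d) atTop atTop)
    (hTp : T.Proper []) (hTd : T.LegalDensity d ∅) (hr : 0 < r) (hB : B ∈ T.nodeHistsAt k)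
    (hc : 0 < c) (hδ : 0 < δ) (ht : ∀ n, t n ≤ N n) (hδt : ∀ n, δ * N n ≤ t n) :
    Tendsto (fun n => unifProb (injSeqs (pairs (Fin n)) (N n)) (fun F =>
      c * (n ^ a * pairDensity n (N n) ^ k) ≤ #(copies B (board (π n) F ((t n + 1) / 2))) ∧
      ¬ HasLeafOrManyCopies T (k + 1)
        (δ / 3 * c / (4 * r) * (n ^ a * pairDensity n (N n) ^ (k + 1)))
        (board (π n) F (t n)))) atTop (nhds 0) := by
  obtain rfl := length_of_mem_nodeHistsAt hB
  rcases mem_leafHists_or_exists_append_mem_nodeHistsAt hB with hleaf | ⟨e, he⟩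
  · refine tendsto_const_nhds.congr' ?_
    filter_upwards [eventually_pairDensity_pos hd hω, eventually_gt_atTop 0] with n hp0 hn
    refine (unifProb_eq_zero ?_).symm
    rintro F - ⟨hmany, hnot⟩
    have hpos : (0 : ℝ) < #(copies B (board (π n) F ((t n + 1) / 2))) :=
      lt_of_lt_of_le (by positivity) hmany
    obtain ⟨f, hf⟩ := card_pos.1 (Nat.cast_pos.1 hpos)
    exact hnot (Or.inl (hasLeafCopy_mono (board_subset (π n) F (by omega))
      ⟨B, hleaf, f, mem_copies.1 hf⟩))
  · have hBe : ValidEdgeSeq (B.map Prod.fst ++ [e]) := by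
      simpa using validEdgeSeq_of_mem_nodeHistsAt hTp (he ⟨0, hr⟩)
    have hdens : DensityLE (boardOf (B.map Prod.fst ++ [e])) d := by
      simpa using densityLE_boardOf_of_mem_nodeHistsAt hTd (he ⟨0, hr⟩)
    have hN := tendsto_atTop_of_densityLE_boardOf hd hp hω hBe hdens
    have hκN : ∀ᶠ n in atTop, δ / 3 * N n ≤ (t n - (t n + 1) / 2 : ℕ) := by
      filter_upwards [(tendsto_natCast_atTop_atTop.comp hN).eventually_gt_atTop (1 / δ)]
        with n hn
      have ht1 : 1 < (t n : ℝ) := ((div_lt_iff₀' hδ).1 hn).trans_le (hδt n)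
      have ht2 : t n ≤ 3 * (t n - (t n + 1) / 2) := by
        have := Nat.one_lt_cast.1 ht1
        omega
      have ht3 : (t n : ℝ) ≤ 3 * (t n - (t n + 1) / 2 : ℕ) := by exact_mod_cast ht2
      linarith [hδt n]
    refine squeeze_zero (fun _ => unifProb_nonneg _ _) (fun n => unifProb_mono ?_)
      (tendsto_unifProb_many_copies_few_extended_copies π hd hp hω hBe hdens hr hc (by positivity)
        ht hκN)
    rintro F - ⟨hmany, hnot⟩
    refine ⟨hmany, fun i => lt_of_not_ge fun hle => hnot (Or.inr ⟨_, he i, ?_⟩)⟩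
    rwa [ncard_coloredCopies]

theorem exists_tendsto_unifProb_not_hasLeafOrManyCopies {T : BuilderTree (Fin a) r} (hd : 0 < d)
    (hp : Tendsto (fun n => pairDensity n (N n)) atTop (nhds 0))
    (hω : Tendsto (fun n => n * pairDensity n (N n) ^ d) atTop atTop)
    (hTp : T.Proper []) (hTd : T.LegalDensity d ∅) (hr : 0 < r) (k : ℕ) {δ : ℝ} {t : ℕ → ℕ}
    (hδ : 0 < δ) (ht : ∀ n, t n ≤ N n) (hδt : ∀ n, δ * N n ≤ t n) :
    ∃ c : ℝ, 0 < c ∧ Tendsto (fun n => unifProb (injSeqs (pairs (Fin n)) (N n)) (fun F =>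
      ¬ HasLeafOrManyCopies T k (c * (n ^ a * pairDensity n (N n) ^ k)) (board (π n) F (t n))))
      atTop (nhds 0) := by
  induction k generalizing δ t with
  | zero =>
    refine ⟨(1 / 2) ^ a, by positivity, tendsto_const_nhds.congr' ?_⟩
    filter_upwards [eventually_ge_atTop (2 * a)] with n hn
    refine (unifProb_eq_zero fun F _ => not_not.2 ?_).symm
    rw [pow_zero, mul_one]
    exact hasLeafOrManyCopies_zero hn
  | succ k ih =>
    have hhalf : ∀ n, δ / 2 * N n ≤ ((t n + 1) / 2 : ℕ) := fun n => by
      have hle : (t n : ℝ) ≤ 2 * ((t n + 1) / 2 : ℕ) := by exact_mod_cast (by omega)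
      linarith [hδt n]
    obtain ⟨c, hc, hlim⟩ := ih (half_pos hδ) (t := fun n => (t n + 1) / 2)
      (fun n => by have := ht n; omega) hhalf
    refine ⟨δ / 3 * c / (4 * r), by positivity, ?_⟩
    have hnodes := tendsto_finsetSum (finite_nodeHistsAt T k).toFinset fun B hB =>
      tendsto_unifProb_many_copies_not_hasLeafOrManyCopies π hd hp hω hTp hTd hr
        ((Set.Finite.mem_toFinset _).1 hB) hc hδ ht hδt
    have hsum := hlim.add hnodes
    rw [sum_const_zero, add_zero] at hsum
    refine squeeze_zero (fun _ => unifProb_nonneg _ _) (fun n => ?_) hsum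
    refine le_trans (unifProb_mono fun F _ hnot => ?_) ((unifProb_or_le _ _ _).trans
      (add_le_add_right (unifProb_exists_mem_le _ _ _) _))
    by_contra! hcon
    rcases hcon.1 with hleaf | ⟨B, hB, hmany⟩
    · exact hnot (Or.inl (hasLeafCopy_mono (board_subset (π n) F (by omega)) hleaf))
    · rw [ncard_coloredCopies] at hmany
      exact hnot (hcon.2 B ((Set.Finite.mem_toFinset _).2 hB) hmany)

end Induction

section OnlineProb

open Finset

theorem validSeqFun_iff_mem_injSeqs {n N : ℕ} {f : Fin N → Sym2 (Fin n)} :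
    ValidSeqFun f ↔ f ∈ injSeqs (pairs (Fin n)) N := by
  simp only [ValidSeqFun, mem_injSeqs, mem_pairs, and_comm]

theorem onlineProb_eq_unifProb (n N : ℕ) (P : (Fin N → Sym2 (Fin n)) → Prop) :
    onlineProb n N P = unifProb (injSeqs (pairs (Fin n)) N) P := by
  have hP : {f : Fin N → Sym2 (Fin n) | ValidSeqFun f ∧ P f} =
      ↑({f ∈ injSeqs (pairs (Fin n)) N | P f} : Finset _) := by
    ext f
    simp only [Set.mem_ofPred_eq, coe_filter, validSeqFun_iff_mem_injSeqs]
  have hV : {f : Fin N → Sym2 (Fin n) | ValidSeqFun f} = ↑(injSeqs (pairs (Fin n)) N) := by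
    ext f
    exact validSeqFun_iff_mem_injSeqs
  rw [onlineProb, hP, hV, Set.ncard_coe_finset, Set.ncard_coe_finset, unifProb_eq_card_div]

theorem tendsto_onlineProb_one {N : ℕ → ℕ} {P : (n : ℕ) → (Fin (N n) → Sym2 (Fin n)) → Prop}
    (hp : Tendsto (fun n => pairDensity n (N n)) atTop (nhds 0))
    (hP : Tendsto (fun n => unifProb (injSeqs (pairs (Fin n)) (N n)) (fun F => ¬ P n F)) atTop
      (nhds 0)) :
    Tendsto (fun n => onlineProb n (N n) (P n)) atTop (nhds 1) := by
  have hone := hP.const_sub 1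
  rw [sub_zero] at hone
  refine hone.congr' ?_
  filter_upwards [hp.eventually_le_const one_pos, eventually_ge_atTop 2] with n hp1 hn
  have hcard : (0 : ℝ) < #(pairs (Fin n)) := by
    rw [card_pairs, Fintype.card_fin]
    exact_mod_cast Nat.choose_pos hn
  rw [pairDensity, div_le_one hcard] at hp1
  rw [unifProb_not (injSeqs_nonempty (Nat.cast_le.1 hp1)), sub_sub_cancel, onlineProb_eq_unifProb]

end OnlineProb

/-- Claim 8 of the paper. Let `𝒯` be a Builder strategy tree with `r ≥ 2`
colors on a board with `a ≥ 1` vertices that is legal for density restriction `d > 0`, and let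
`N(n)` satisfy `n^(2-1/d) = o(N(n))` and `N(n) = o(n²)`. Then for every `k ≥ 0` and every
sequence of online Painter strategies there is a constant `c > 0` such that a.a.s. the colored
board after `N(n)` steps contains a copy of a leaf of `𝒯`, or there is a node `B` at depth `k`
of `𝒯` such that the board contains at least `c · n^a · (N(n)/n²)^k` copies of `B`. -/
theorem statement4 (r a : ℕ) (hr : 2 ≤ r) (ha : 1 ≤ a) (d : ℝ) (hd : 0 < d)
    (T : BuilderTree (Fin a) r) (hTp : T.Proper []) (hTd : T.LegalDensity d ∅)
    (N : ℕ → ℕ)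
    (hN : (fun n : ℕ => (n : ℝ) ^ ((2 : ℝ) - 1 / d)) =o[atTop] (fun n : ℕ => (N n : ℝ)))
    (hN2 : (fun n : ℕ => (N n : ℝ)) =o[atTop] (fun n : ℕ => (n : ℝ) ^ 2))
    (k : ℕ) (π : (n : ℕ) → PainterStrategy (Fin n) r) :
    ∃ c : ℝ, 0 < c ∧
      Tendsto (fun n : ℕ => onlineProb n (N n)
          (fun f =>
            HasLeafCopy T (runPainter (π n) (List.ofFn f)) ∨
            ∃ B ∈ T.nodeHistsAt k,
              c * (n : ℝ) ^ a * ((N n : ℝ) / (n : ℝ) ^ 2) ^ k ≤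
                ((ColoredCopies B (runPainter (π n) (List.ofFn f))).ncard : ℝ)))
        atTop (nhds 1) := by
  have hp := tendsto_pairDensity_zero hN2
  have hω := tendsto_mul_pairDensity_rpow_atTop hd hN
  obtain ⟨c, hc, hlim⟩ := exists_tendsto_unifProb_not_hasLeafOrManyCopies π hd hp hω hTp hTd
    (zero_lt_two.trans_le hr) k one_pos (t := N) (fun _ => le_rfl) (fun n => (one_mul _).le)
  refine ⟨c, hc, tendsto_onlineProb_one hp
    (squeeze_zero' (.of_forall fun _ => unifProb_nonneg _ _) ?_ hlim)⟩
  filter_upwards [eventually_ge_atTop 2] with n hn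
  refine unifProb_mono fun F _ hnot hmany => hnot ?_
  rw [board_eq_runPainter] at hmany
  refine hmany.of_le ?_
  rw [mul_assoc]
  gcongr
  exact div_sq_le_pairDensity hn
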